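/- arXiv:2205.01153 — 2 statements merged into one kernel-verified Lean document; each statement's English description precedes it below -/
import Mathlib

section
/- Let (R, m) be a complete regular local domain, let I ⊆ R be an ideal, let M ≥ 1, h ≥ 1, n ≥ 1 be integers, let s_1, …, s_n be non-negative integers, and let u ∈ I^{(M)}. Let v be an element of an algebraic closure of Frac(R) with v^M = u, let R' be the integral closure of R[v] in Frac(R)(v), and let B be a big Cohen–Macaulay algebra over R'. Suppose that for every associated prime p of R/I there exists c_p ∈ R − p such that c_p·v^{s_i+h} ∈ I^{s_i+1}B for every i = 1, …, n. Then for every i = 1, …, n one has v^{s_i+h} ∈ I^{(s_i+1)}B. -/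
set_option synthInstance.maxHeartbeats 1000000
set_option maxHeartbeats 2000000

open Ideal IsLocalRing

/-- The multiplicative set `W = R − ⋃_{p ∈ Ass_R(R/I)} p`. -/
def assPrimesCompl {R : Type*} [CommRing R] (I : Ideal R) : Submonoid R where
  carrier := {x : R | ∀ p ∈ associatedPrimes R (R ⧸ I), x ∉ p}
  mul_mem' := by
    intro a b ha hb p hp hab
    rcases hp.isPrime.mem_or_mem hab with h | h
    · exact ha p hp h
    · exact hb p hp h
  one_mem' := fun p hp h => hp.isPrime.ne_top ((Ideal.eq_top_iff_one _).mpr h)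

/-- The `n`-th symbolic power `I⁽ⁿ⁾ = IⁿR_W ∩ R`. -/
noncomputable def symbolicPower {R : Type*} [CommRing R] (I : Ideal R) (n : ℕ) : Ideal R :=
  (Ideal.map (algebraMap R (Localization (assPrimesCompl I))) (I ^ n)).comap
    (algebraMap R (Localization (assPrimesCompl I)))

/-- A regular local ring: a Noetherian local ring whose maximal ideal can be generated by
`dim R` elements. -/
def IsRegularLocal (A : Type*) [CommRing A] : Prop :=
  IsNoetherianRing A ∧ ∃ h : IsLocalRing A,
    letI := h
    ∃ s : Finset A, Ideal.span (s : Set A) = IsLocalRing.maximalIdeal A ∧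
      (s.card : WithBot ℕ∞) = ringKrullDim A

/-- `B` is a (balanced) big Cohen–Macaulay algebra over the Noetherian local ring `S`:
every system of parameters of `S` is a regular sequence on `B`. -/
noncomputable def IsBigCohenMacaulay (S : Type*) [CommRing S] (hS : IsLocalRing S)
    (B : Type*) [CommRing B] [Algebra S B] : Prop :=
  letI := hS
  ∀ xs : List S, (xs.length : WithBot ℕ∞) = ringKrullDim S →
    (∀ x ∈ xs, x ∈ maximalIdeal S) →
    (Ideal.span {x : S | x ∈ xs}).radical = maximalIdeal S →
    RingTheory.Sequence.IsRegular B (xs.map (algebraMap S B))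

section ExtPart
open CategoryTheory CategoryTheory.Abelian
universe u v
variable {R : Type u} [CommRing R]

/-- `Ext^i(M, E) = 0`. -/
def EV (R : Type u) [CommRing R] (E : Type v) [AddCommGroup E] [Module R E]
    (M : Type u) [AddCommGroup M] [Module R M] (i : ℕ) : Prop :=
  Subsingleton (Ext.{max u v} (ModuleCat.of.{max u v} R (ULift.{v} M))
    (ModuleCat.of.{max u v} R (ULift.{u} E)) i)

variable {E : Type v} [AddCommGroup E] [Module R E]
variable {A C N : Type u} [AddCommGroup A] [Module R A] [AddCommGroup C] [Module R C]
  [AddCommGroup N] [Module R N]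

def upMap (f : A →ₗ[R] C) : ULift.{v} A →ₗ[R] ULift.{v} C :=
  (ULift.moduleEquiv.symm.toLinearMap ∘ₗ f) ∘ₗ ULift.moduleEquiv.toLinearMap

def upSC (f : A →ₗ[R] C) (g : C →ₗ[R] N) (h : Function.Exact f g) :
    ShortComplex (ModuleCat.{max u v} R) :=
  ShortComplex.mk (ModuleCat.ofHom (upMap.{u,v} f)) (ModuleCat.ofHom (upMap.{u,v} g)) (by
    ext x
    exact h.apply_apply_eq_zero x.down)

lemma upSC_exact (f : A →ₗ[R] C) (g : C →ₗ[R] N) (h : Function.Exact f g)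
    (hf : Function.Injective f) (hg : Function.Surjective g) :
    (upSC.{u,v} f g h).ShortExact where
  exact := by
    rw [ShortComplex.moduleCat_exact_iff]
    intro x hx
    have hx' : g x.down = 0 := congrArg ULift.down hx
    obtain ⟨y, hy⟩ := (h x.down).mp hx'
    exact ⟨⟨y⟩, ULift.down_injective hy⟩
  mono_f := by
    rw [ModuleCat.mono_iff_injective]
    intro x y hxy
    exact ULift.down_injective (hf (congrArg ULift.down hxy))
  epi_g := by
    rw [ModuleCat.epi_iff_surjective]
    intro x
    obtain ⟨y, hy⟩ := hg x.down
    exact ⟨⟨y⟩, ULift.down_injective hy⟩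

lemma EV.mid {f : A →ₗ[R] C} {g : C →ₗ[R] N} (h : Function.Exact f g)
    (hf : Function.Injective f) (hg : Function.Surjective g) {i : ℕ}
    (hA : EV R E A i) (hN : EV R E N i) : EV R E C i := by
  have S := upSC_exact.{u,v} f g h hf hg
  refine subsingleton_of_forall_eq 0 fun x => ?_
  obtain ⟨y, hy⟩ := Ext.contravariant_sequence_exact₂ S _ x (hA.elim _ _)
  rw [← hy, show y = 0 from hN.elim _ _, Ext.comp_zero]; rfl

lemma EV.left {f : A →ₗ[R] C} {g : C →ₗ[R] N} (h : Function.Exact f g)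
    (hf : Function.Injective f) (hg : Function.Surjective g) {i : ℕ}
    (hC : EV R E C i) (hN : EV R E N (i + 1)) : EV R E A i := by
  have S := upSC_exact.{u,v} f g h hf hg
  refine subsingleton_of_forall_eq 0 fun x => ?_
  obtain ⟨y, hy⟩ := Ext.contravariant_sequence_exact₁ S _ x (add_comm 1 i) (hN.elim _ _)
  rw [← hy, show y = 0 from hC.elim _ _, Ext.comp_zero]; rfl

lemma EV.right {f : A →ₗ[R] C} {g : C →ₗ[R] N} (h : Function.Exact f g)
    (hf : Function.Injective f) (hg : Function.Surjective g) {i : ℕ}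
    (hA : EV R E A i) (hC : EV R E C (i + 1)) : EV R E N (i + 1) := by
  have S := upSC_exact.{u,v} f g h hf hg
  refine subsingleton_of_forall_eq 0 fun x => ?_
  obtain ⟨y, hy⟩ := Ext.contravariant_sequence_exact₃ S _ x (hC.elim _ _) (add_comm 1 i)
  rw [← hy, show y = 0 from hA.elim _ _, Ext.comp_zero]; rfl

lemma EV.right_zero {f : A →ₗ[R] C} {g : C →ₗ[R] N} (h : Function.Exact f g)
    (hf : Function.Injective f) (hg : Function.Surjective g)
    (hs : Function.Surjective (f.lcomp R E)) (hC : EV R E C 1) : EV R E N 1 := by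
  have S := upSC_exact.{u,v} f g h hf hg
  refine subsingleton_of_forall_eq 0 fun x => ?_
  obtain ⟨y, hy⟩ := Ext.contravariant_sequence_exact₃ S _ x (hC.elim _ _) (add_comm 1 0)
  obtain ⟨φ, hφ⟩ := (Ext.mk₀_bijective _ _).2 y
  let φ' : A →ₗ[R] E := ULift.moduleEquiv.toLinearMap ∘ₗ φ.hom ∘ₗ ULift.moduleEquiv.symm.toLinearMap
  obtain ⟨ψ, hψ⟩ := hs φ'
  let ψ' : (upSC.{u,v} f g h).X₂ ⟶ ModuleCat.of.{max u v} R (ULift.{u} E) :=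
    ModuleCat.ofHom (ULift.moduleEquiv.symm.toLinearMap ∘ₗ ψ ∘ₗ ULift.moduleEquiv.toLinearMap)
  have hc : φ = (upSC.{u,v} f g h).f ≫ ψ' := by
    ext x
    exact (congrArg (fun k : A →ₗ[R] E => k x.down) hψ).symm
  rw [← hy, ← hφ, hc, ← Ext.mk₀_comp_mk₀, S.extClass_comp_assoc]; rfl

lemma EV.lcomp_surjective {f : A →ₗ[R] C} {g : C →ₗ[R] N} (h : Function.Exact f g)
    (hf : Function.Injective f) (hg : Function.Surjective g)
    (hN : EV R E N 1) : Function.Surjective (f.lcomp R E) := by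
  have S := upSC_exact.{u,v} f g h hf hg
  intro φ
  let φ' : (upSC.{u,v} f g h).X₁ ⟶ ModuleCat.of.{max u v} R (ULift.{u} E) :=
    ModuleCat.ofHom (ULift.moduleEquiv.symm.toLinearMap ∘ₗ φ ∘ₗ ULift.moduleEquiv.toLinearMap)
  obtain ⟨y, hy⟩ := Ext.contravariant_sequence_exact₁ S _ (Ext.mk₀ φ') (add_comm 1 0)
    (hN.elim _ _)
  obtain ⟨ψ, hψ⟩ := (Ext.mk₀_bijective _ _).2 y
  rw [← hψ, Ext.mk₀_comp_mk₀] at hy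
  have hy' := (Ext.mk₀_bijective _ _).1 hy
  refine ⟨ULift.moduleEquiv.toLinearMap ∘ₗ ψ.hom ∘ₗ ULift.moduleEquiv.symm.toLinearMap, ?_⟩
  ext x
  have := congrArg (fun k => (k.hom (ULift.up x)).down) hy'
  exact this

lemma EV.of_projective [Module.Projective R A] (i : ℕ) : EV R E A (i + 1) := by
  have : Module.Projective R (ULift.{v} A) := Module.Projective.of_equiv ULift.moduleEquiv.symm
  have : Projective (ModuleCat.of.{max u v} R (ULift.{v} A)) :=
    (IsProjective.iff_projective _).mp this
  exact Ext.subsingleton_of_projective _ _ _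

lemma EV.of_subsingleton [Subsingleton A] (i : ℕ) : EV R E A (i + 1) :=
  EV.of_projective i

lemma EV.congr (e : A ≃ₗ[R] C) {i : ℕ} (hA : EV R E A (i+1)) : EV R E C (i+1) := by
  refine EV.mid (N := PUnit.{u+1}) (f := e.toLinearMap) (g := 0) ?_ e.injective ?_ hA (EV.of_subsingleton i)
  · intro x; simp
  · intro x; exact ⟨0, rfl⟩

end ExtPart

section RegPart
universe u

/-- Regular local of dimension `d` (working form). -/
def Rg (A : Type u) [CommRing A] [IsLocalRing A] (d : ℕ) : Prop :=
  IsNoetherianRing A ∧ ∃ s : Finset A, Ideal.span (s : Set A) = maximalIdeal A ∧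
    s.card ≤ d ∧ (d : WithBot ℕ∞) ≤ ringKrullDim A

lemma Rg.quot {A : Type u} [CommRing A] [IsLocalRing A] {d : ℕ} (h : Rg A (d + 1))
    {x : A} (hx : x ∈ maximalIdeal A) (hx2 : x ∉ maximalIdeal A ^ 2) :
    ∃ _ : IsLocalRing (A ⧸ Ideal.span {x}), Rg (A ⧸ Ideal.span {x}) d := by
  classical
  obtain ⟨hN, s, hs, hcard, hd⟩ := h
  have hne : Ideal.span {x} ≠ ⊤ := by
    intro h
    have := (Ideal.span_singleton_le_iff_mem _).mpr hx
    rw [h] at this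
    exact (maximalIdeal.isMaximal A).ne_top (top_le_iff.mp this)
  have : Nontrivial (A ⧸ Ideal.span {x}) := Ideal.Quotient.nontrivial_iff.mpr hne
  have hl : IsLocalRing (A ⧸ Ideal.span {x}) :=
    IsLocalRing.of_surjective' (Ideal.Quotient.mk _) Ideal.Quotient.mk_surjective
  refine ⟨hl, inferInstance, ?_⟩
  have hx' := hx
  rw [← hs] at hx'
  obtain ⟨a, ha⟩ := (Submodule.mem_span_finset'.mp hx')
  have : ∃ i, IsUnit (a i) := by
    by_contra hcon
    push Not at hcon
    apply hx2
    rw [← ha, pow_two]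
    refine Ideal.sum_mem _ fun i _ => ?_
    exact Ideal.mul_mem_mul ((mem_maximalIdeal _).mpr (hcon i))
      (hs ▸ Ideal.subset_span i.2)
  obtain ⟨i, hi⟩ := this
  have hmap : maximalIdeal (A ⧸ Ideal.span {x}) =
      (maximalIdeal A).map (Ideal.Quotient.mk (Ideal.span {x})) :=
    ((IsLocalRing.eq_maximalIdeal
        ((Ideal.map_eq_top_or_isMaximal_of_surjective _ Ideal.Quotient.mk_surjective
          (maximalIdeal.isMaximal A)).resolve_left (by
            intro htop
            have h1 := Ideal.comap_map_of_surjective (Ideal.Quotient.mk (Ideal.span {x}))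
              Ideal.Quotient.mk_surjective (maximalIdeal A)
            rw [htop, Ideal.comap_top, ← RingHom.ker_eq_comap_bot, Ideal.mk_ker] at h1
            have h2 : Ideal.span {x} ≤ maximalIdeal A := (Ideal.span_singleton_le_iff_mem _).mpr hx
            rw [sup_eq_left.mpr h2] at h1
            exact (maximalIdeal.isMaximal A).ne_top h1.symm))).symm)
  refine ⟨(s.erase i).image (Ideal.Quotient.mk (Ideal.span {x})), ?_, ?_, ?_⟩
  · rw [hmap, ← hs, Ideal.map_span]
    apply le_antisymm
    · apply Ideal.span_mono
      intro y hy
      simp only [Finset.coe_image, Set.mem_image] at hy ⊢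
      obtain ⟨z, hz, rfl⟩ := hy
      exact ⟨z, Finset.mem_of_mem_erase hz, rfl⟩
    · rw [Ideal.span_le]
      rintro _ ⟨y, hy, rfl⟩
      by_cases hyi : y = i
      · subst hyi
        obtain ⟨b, hb⟩ := hi.exists_left_inv
        have key : Ideal.Quotient.mk (Ideal.span {x}) (i : A) =
            - Ideal.Quotient.mk (Ideal.span {x}) b *
              ∑ j ∈ Finset.univ.erase i, Ideal.Quotient.mk (Ideal.span {x}) (a j * j) := by
          have e1 : ∑ j, Ideal.Quotient.mk (Ideal.span {x}) (a j * j) = 0 := by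
            rw [← map_sum]
            have : ∑ j, a j * (j : A) = x := ha
            rw [this]
            exact Ideal.Quotient.eq_zero_iff_mem.mpr (Ideal.mem_span_singleton_self x)
          rw [← Finset.add_sum_erase _ _ (Finset.mem_univ i)] at e1
          have e2 : Ideal.Quotient.mk (Ideal.span {x}) (i : A) =
            Ideal.Quotient.mk (Ideal.span {x}) b * Ideal.Quotient.mk (Ideal.span {x}) (a i * i) := by
            rw [← map_mul, ← mul_assoc, hb, one_mul]
          rw [e2, eq_neg_of_add_eq_zero_left e1]; ring
        rw [SetLike.mem_coe, key]
        refine Ideal.mul_mem_left _ _ (Ideal.sum_mem _ fun j hj => ?_)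
        rw [map_mul]
        refine Ideal.mul_mem_left _ _ (Ideal.subset_span ?_)
        rw [Finset.coe_image]
        refine ⟨j, ?_, rfl⟩
        rw [Finset.mem_coe, Finset.mem_erase]
        exact ⟨fun h => (Finset.ne_of_mem_erase hj) (Subtype.ext h), j.2⟩
      · apply Ideal.subset_span
        rw [Finset.coe_image]
        exact ⟨y, Finset.mem_coe.mpr (Finset.mem_erase.mpr ⟨hyi, hy⟩), rfl⟩
  · refine Finset.card_image_le.trans ?_
    rw [Finset.card_erase_of_mem i.2]; omega
  · have h1 := ringKrullDim_le_ringKrullDim_quotient_add_card ({x} : Finset A) (by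
      rw [IsLocalRing.ringJacobson_eq_maximalIdeal]; simpa using hx)
    have h2 := hd.trans h1
    rw [Finset.coe_singleton, Finset.card_singleton, Nat.cast_one, Nat.cast_add] at h2
    revert h2
    generalize ringKrullDim (A ⧸ Ideal.span {x}) = k
    intro h2
    exact ENat.WithBot.add_le_add_one_right_iff.mp h2

lemma Rg.exists_elt {A : Type u} [CommRing A] [IsLocalRing A] {d : ℕ} (h : Rg A (d + 1)) :
    ∃ x ∈ maximalIdeal A, x ∉ maximalIdeal A ^ 2 ∧ ∀ p ∈ minimalPrimes A, x ∉ p := by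
  classical
  obtain ⟨hN, s, hs, hcard, hd⟩ := h
  have hdim : ringKrullDim A ≠ 0 := by
    intro h0
    rw [h0] at hd
    have : d + 1 ≤ 0 := by exact_mod_cast hd
    omega
  by_contra hcon
  push Not at hcon
  have hfin := minimalPrimes.finite_of_isNoetherianRing A
  have hsub : (maximalIdeal A : Set A) ⊆
      ⋃ i ∈ (insert (maximalIdeal A ^ 2) (minimalPrimes A)), ((i : Ideal A) : Set A) := by
    intro x hx
    simp only [Set.mem_iUnion]
    by_cases h2 : x ∈ maximalIdeal A ^ 2
    · exact ⟨_, Set.mem_insert _ _, h2⟩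
    · obtain ⟨p, hp, hxp⟩ := hcon x hx h2
      exact ⟨p, Set.mem_insert_of_mem _ hp, hxp⟩
  rw [Ideal.subset_union_prime_finite (hfin.insert _) (maximalIdeal A ^ 2) (maximalIdeal A ^ 2)] at hsub
  · obtain ⟨p, hp, hle⟩ := hsub
    rcases hp with rfl | hp
    · have hb : maximalIdeal A = ⊥ := by
        apply Submodule.eq_bot_of_le_smul_of_le_jacobson_bot (maximalIdeal A) _
          (IsNoetherian.noetherian _)
        · rw [smul_eq_mul, ← pow_two]; exact hle
        · exact IsLocalRing.maximalIdeal_le_jacobson _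
      have : IsField A := IsLocalRing.isField_iff_maximalIdeal_eq.mpr hb
      exact hdim (ringKrullDim_eq_zero_of_isField this)
    · have hpp : p.IsPrime := hp.1.1
      have e : maximalIdeal A = p := le_antisymm hle (le_maximalIdeal hpp.ne_top)
      apply hdim
      rw [← IsLocalRing.maximalIdeal_height_eq_ringKrullDim, e,
        Ideal.height_eq_zero_iff.mpr hp]
      rfl
  · intro i hi h1 _
    rcases hi with rfl | hi
    · exact absurd rfl h1
    · exact hi.1.1

lemma Rg.domain {d : ℕ} : ∀ {A : Type u} [CommRing A] [IsLocalRing A], Rg A d → IsDomain A := by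
  induction d with
  | zero =>
    intro A _ _ ⟨hN, s, hs, hcard, hd⟩
    have : s = ∅ := Finset.card_eq_zero.mp (Nat.le_zero.mp hcard)
    subst this
    simp only [Finset.coe_empty, Ideal.span_empty] at hs
    exact (IsLocalRing.isField_iff_maximalIdeal_eq.mpr hs.symm).isDomain
  | succ d ih =>
    intro A _ _ h
    have hN := h.1
    obtain ⟨x, hx, hx2, hxm⟩ := h.exists_elt
    obtain ⟨hl, hq⟩ := h.quot hx hx2
    have hdom := ih hq
    have hp : (Ideal.span {x}).IsPrime := (Ideal.Quotient.isDomain_iff_prime _).mp hdom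
    obtain ⟨q, hq, hqx⟩ := Ideal.exists_minimalPrimes_le (bot_le : ⊥ ≤ Ideal.span {x})
    have hqp : q.IsPrime := hq.1.1
    have hb : q = ⊥ := by
      apply Submodule.eq_bot_of_le_smul_of_le_jacobson_bot (maximalIdeal A) _
          (IsNoetherian.noetherian _)
      · intro y hy
        obtain ⟨z, rfl⟩ := Ideal.mem_span_singleton.mp (hqx hy)
        exact Ideal.mul_mem_mul hx ((hqp.mem_or_mem hy).resolve_left (hxm q hq))
      · exact IsLocalRing.maximalIdeal_le_jacobson _
    subst hb
    exact IsDomain.of_bot_isPrime A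

lemma Rg.step {A : Type u} [CommRing A] [IsLocalRing A] {d : ℕ} (h : Rg A (d + 1)) :
    ∃ x ∈ maximalIdeal A, IsSMulRegular A x ∧
      ∃ _ : IsLocalRing (A ⧸ Ideal.span {x}), Rg (A ⧸ Ideal.span {x}) d := by
  have := h.domain
  obtain ⟨x, hx, hx2, hxm⟩ := h.exists_elt
  refine ⟨x, hx, ?_, h.quot hx hx2⟩
  have : x ≠ 0 := by rintro rfl; exact hx2 (Ideal.zero_mem _)
  exact IsSMulRegular.of_ne_zero this

lemma Rg.dim {A : Type u} [CommRing A] [IsLocalRing A] {d : ℕ} (h : Rg A d) :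
    ringKrullDim A = d := by
  obtain ⟨hN, s, hs, hcard, hd⟩ := h
  refine le_antisymm ?_ hd
  refine (ringKrullDim_le_spanFinrank_maximalIdeal A).trans ?_
  rw [← hs]
  have := Submodule.spanFinrank_span_le_ncard_of_finite (R := A) (s.finite_toSet)
  rw [Set.ncard_coe_finset] at this
  exact_mod_cast this.trans hcard

end RegPart

section PDPart
universe u v

/-- Working form of projective dimension at most `j`. -/
def PD : ℕ → ∀ (A : Type u) [CommRing A] (M : Type u) [AddCommGroup M] [Module A M], Prop
  | 0 => fun A _ M _ _ => Module.Free A M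
  | j + 1 => fun A _ M _ _ => ∀ (n : ℕ) (f : (Fin n → A) →ₗ[A] M), Function.Surjective f →
      PD j A (LinearMap.ker f)

lemma PD.congr {A : Type u} [CommRing A] {M N : Type u} [AddCommGroup M] [Module A M]
    [AddCommGroup N] [Module A N] (e : M ≃ₗ[A] N) {j : ℕ} (h : PD j A M) : PD j A N := by
  cases j with
  | zero =>
    have : Module.Free A M := h
    exact Module.Free.of_equiv e
  | succ j =>
    intro n f hf
    have := h n (e.symm.toLinearMap ∘ₗ f) (e.symm.surjective.comp hf)
    rwa [LinearEquiv.ker_comp] at this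

open Pointwise in
lemma PD.change {A : Type u} [CommRing A] [IsNoetherianRing A] {x : A}
    (hx : x ∈ (⊥ : Ideal A).jacobson) (hreg : IsSMulRegular A x) {j : ℕ} :
    ∀ {K : Type u} [AddCommGroup K] [Module A K] [Module.Finite A K], IsSMulRegular K x →
      PD j (A ⧸ Ideal.span {x}) (QuotSMulTop x K) → PD j A K := by
  induction j with
  | zero =>
    intro K _ _ _ hK h
    have : Module.FinitePresentation A K := Module.finitePresentation_of_finite A K
    exact (Module.free_quotSMulTop_iff_free A K hx hK).mp h
  | succ j ih =>
    intro K _ _ _ hK h n f hf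
    have hK' : IsSMulRegular (LinearMap.ker f) x := by
      intro a b hab
      apply Subtype.ext
      funext i
      have := congrArg (fun z : LinearMap.ker f => (z : Fin n → A) i) hab
      exact hreg this
    apply ih hK'
    let q := Ideal.Quotient.mk (Ideal.span {x})
    let g : (Fin n → A ⧸ Ideal.span {x}) →ₗ[A ⧸ Ideal.span {x}] QuotSMulTop x K :=
      Fintype.linearCombination (A ⧸ Ideal.span {x})
        (fun i => (Submodule.Quotient.mk (f (Pi.single i 1)) : QuotSMulTop x K))
    have hg : ∀ a : Fin n → A, g (fun i => q (a i)) = Submodule.Quotient.mk (f a) := by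
      intro a
      rw [Fintype.linearCombination_apply]
      have e1 : ∀ i, q (a i) • (Submodule.Quotient.mk (f (Pi.single i 1)) : QuotSMulTop x K) =
          (x • (⊤ : Submodule A K)).mkQ (f (a i • Pi.single i 1)) := by
        intro i
        rw [map_smul, map_smul]; rfl
      rw [Finset.sum_congr rfl fun i _ => e1 i, ← map_sum, ← map_sum]
      have e2 : ∑ i, a i • (Pi.single i (1 : A) : Fin n → A) = a := by
        ext j; simp [Finset.sum_apply, Pi.single_apply]
      rw [e2]; rfl
    have hgs : Function.Surjective g := by
      intro k
      obtain ⟨k, rfl⟩ := Submodule.Quotient.mk_surjective _ k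
      obtain ⟨a, rfl⟩ := hf k
      exact ⟨_, hg a⟩
    let t : (Fin n → A) →ₗ[A] (Fin n → A ⧸ Ideal.span {x}) :=
      LinearMap.pi fun i => (Ideal.Quotient.mkₐ A (Ideal.span {x})).toLinearMap ∘ₗ LinearMap.proj i
    have ht : ∀ a, g (t a) = Submodule.Quotient.mk (f a) := hg
    let φ : LinearMap.ker f →ₗ[A] LinearMap.ker g :=
      LinearMap.codRestrict ((LinearMap.ker g).restrictScalars A) (t ∘ₗ (LinearMap.ker f).subtype)
        (by
          intro a
          have : f a = 0 := a.2
          show g (t a) = 0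
          rw [ht, this]; rfl)
    have hφs : Function.Surjective φ := by
      rintro ⟨b, hb⟩
      have : ∃ b' : Fin n → A, t b' = b := by
        choose c hc using fun i => Ideal.Quotient.mk_surjective (b i)
        exact ⟨c, funext hc⟩
      obtain ⟨b', rfl⟩ := this
      have h1 : g (t b') = 0 := hb
      rw [ht, Submodule.Quotient.mk_eq_zero] at h1
      obtain ⟨k, -, hk⟩ := h1
      obtain ⟨c, rfl⟩ := hf k
      refine ⟨⟨b' - x • c, ?_⟩, ?_⟩
      · rw [LinearMap.mem_ker, map_sub, map_smul, ← hk]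
        exact sub_self _
      · apply Subtype.ext
        show t (b' - x • c) = t b'
        rw [map_sub, sub_eq_self]
        funext i
        exact Ideal.Quotient.eq_zero_iff_mem.mpr
          (Ideal.mul_mem_right _ _ (Ideal.mem_span_singleton_self x))
    have hφk : LinearMap.ker φ = x • (⊤ : Submodule A (LinearMap.ker f)) := by
      ext a
      constructor
      · intro ha
        have h1 : t a = 0 := congrArg Subtype.val (LinearMap.mem_ker.mp ha)
        have h2 : ∀ i, ∃ c, (a : Fin n → A) i = x * c := by
          intro i
          have := congrFun h1 i
          exact Ideal.mem_span_singleton.mp (Ideal.Quotient.eq_zero_iff_mem.mp this)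
        choose c hc using h2
        have h3 : (a : Fin n → A) = x • c := funext hc
        have h4 : f c = 0 := by
          apply hK
          show x • f c = x • 0
          rw [← map_smul, ← h3, smul_zero]
          exact a.2
        exact ⟨⟨c, h4⟩, trivial, Subtype.ext h3.symm⟩
      · rintro ⟨c, -, rfl⟩
        rw [LinearMap.mem_ker]
        apply Subtype.ext
        funext i
        exact Ideal.Quotient.eq_zero_iff_mem.mpr
          (Ideal.mul_mem_right _ _ (Ideal.mem_span_singleton_self x))
    let e : QuotSMulTop x (LinearMap.ker f) ≃ₗ[A] LinearMap.ker g :=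
      (Submodule.quotEquivOfEq _ _ hφk.symm) ≪≫ₗ φ.quotKerEquivOfSurjective hφs
    exact (h n g hgs).congr
      (e.extendScalarsOfSurjective (S := A ⧸ Ideal.span {x}) Ideal.Quotient.mk_surjective).symm

lemma Rg.pd {d : ℕ} : ∀ {A : Type u} [CommRing A] [IsLocalRing A], Rg A d →
    ∀ (M : Type u) [AddCommGroup M] [Module A M] [Module.Finite A M], PD d A M := by
  induction d with
  | zero =>
    intro A _ _ ⟨hN, s, hs, hcard, hd⟩ M _ _ _
    have : s = ∅ := Finset.card_eq_zero.mp (Nat.le_zero.mp hcard)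
    subst this
    simp only [Finset.coe_empty, Ideal.span_empty] at hs
    have hf := (IsLocalRing.isField_iff_maximalIdeal_eq.mpr hs.symm)
    let := hf.toField
    exact Module.Free.of_divisionRing A M
  | succ d ih =>
    intro A _ _ h M _ _ _ n f hf
    have hN := h.1
    obtain ⟨x, hx, hreg, hl, hq⟩ := h.step
    refine PD.change (IsLocalRing.maximalIdeal_le_jacobson _ hx) hreg ?_ ?_
    · intro a b hab
      apply Subtype.ext
      funext i
      have := congrArg (fun z : LinearMap.ker f => (z : Fin n → A) i) hab
      exact hreg this
    · have : Module.Finite (A ⧸ Ideal.span {x}) (QuotSMulTop x (LinearMap.ker f)) :=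
        Module.Finite.of_restrictScalars_finite A _ _
      exact ih hq _

lemma PD.ev {A : Type u} [CommRing A] [IsNoetherianRing A] {E : Type v} [AddCommGroup E]
    [Module A E] {j : ℕ} : ∀ {M : Type u} [AddCommGroup M] [Module A M] [Module.Finite A M],
    PD j A M → ∀ i, j < i → EV A E M i := by
  induction j with
  | zero =>
    intro M _ _ _ h i hi
    obtain ⟨i, rfl⟩ := Nat.exists_eq_succ_of_ne_zero hi.ne'
    have : Module.Free A M := h
    exact EV.of_projective i
  | succ j ih =>
    intro M _ _ _ h i hi
    obtain ⟨i, rfl⟩ := Nat.exists_eq_succ_of_ne_zero (by omega : i ≠ 0)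
    obtain ⟨n, f, hf⟩ := Module.Finite.exists_fin' A M
    exact EV.right (f := (LinearMap.ker f).subtype) (g := f)
      (LinearMap.exact_subtype_ker_map f) (Submodule.subtype_injective _) hf
      (ih (h n f hf) i (by omega)) (EV.of_projective i)

end PDPart

section CMPart
universe u
open RingTheory.Sequence CategoryTheory CategoryTheory.Abelian Pointwise

lemma Rg.exists_seq {d : ℕ} : ∀ {A : Type u} [CommRing A] [IsLocalRing A], Rg A d →
    ∃ rs : List A, rs.length = d ∧ (∀ r ∈ rs, r ∈ maximalIdeal A) ∧ IsRegular A rs := by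
  induction d with
  | zero =>
    intro A _ _ h
    exact ⟨[], rfl, by simp, IsRegular.nil A A⟩
  | succ d ih =>
    intro A _ _ h
    obtain ⟨x, hx, hreg, hl, hq⟩ := h.step
    obtain ⟨rs, hlen, hmem, hrs⟩ := ih hq
    have hsurj : Function.Surjective (Ideal.Quotient.mk (Ideal.span {x})) :=
      Ideal.Quotient.mk_surjective
    have hloc : IsLocalHom (Ideal.Quotient.mk (Ideal.span {x})) :=
      IsLocalHom.of_surjective _ hsurj
    let t := Function.surjInv hsurj
    have ht : ∀ r, Ideal.Quotient.mk (Ideal.span {x}) (t r) = r := Function.surjInv_eq hsurj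
    refine ⟨x :: rs.map t, by simp [hlen], ?_, ?_⟩
    · intro r hr
      rcases List.mem_cons.mp hr with rfl | hr
      · exact hx
      · obtain ⟨r', hr', rfl⟩ := List.mem_map.mp hr
        have h1 := hmem r' hr'
        rw [← ht r'] at h1
        rw [mem_maximalIdeal, mem_nonunits_iff] at h1 ⊢
        exact fun hu => h1 (hu.map _)
    · rw [isRegular_cons_iff']
      refine ⟨hreg, ?_⟩
      have e1 : (rs.map t).map (Ideal.Quotient.mk (Ideal.span {x})) = rs := by
        rw [List.map_map]
        conv_rhs => rw [← List.map_id rs]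
        exact List.map_congr_left fun r _ => ht r
      rw [e1]
      have e2 : Ideal.span {x} = x • (⊤ : Submodule A A) := by
        rw [← Submodule.ideal_span_singleton_smul]; simp
      let e : (A ⧸ Ideal.span {x}) ≃ₗ[A] QuotSMulTop x A := Submodule.quotEquivOfEq _ _ e2
      let e' := e.extendScalarsOfSurjective (S := A ⧸ Ideal.span {x}) hsurj
      exact (e'.isRegular_congr rs).mp hrs

variable {R : Type u} [CommRing R] [IsLocalRing R] [IsNoetherianRing R]

lemma length_le_dim_of_ass (rs : List R) : ∀ (M : Type u) [AddCommGroup M] [Module R M]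
    [Module.Finite R M], (∀ r ∈ rs, r ∈ maximalIdeal R) → IsRegular M rs →
    ∀ P ∈ associatedPrimes R M, (rs.length : WithBot ℕ∞) ≤ ringKrullDim (R ⧸ P) := by
  induction rs with
  | nil =>
    intro M _ _ _ _ _ P hP
    have := hP.isPrime
    have : Nontrivial (R ⧸ P) := Ideal.Quotient.nontrivial_iff.mpr this.ne_top
    simpa using ringKrullDim_nonneg_of_nontrivial (R := R ⧸ P)
  | cons x rs ih =>
    intro M _ _ _ hmem hreg P hP
    have hPp := hP.isPrime
    obtain ⟨hx, hrs⟩ := (isRegular_cons_iff M x rs).mp hreg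
    have hxm : x ∈ maximalIdeal R := hmem x (by simp)
    obtain ⟨-, z, hz⟩ := (isAssociatedPrime_iff).mp hP
    have hz' : ∀ p, p ∈ P ↔ p • z = 0 := by
      intro p
      rw [hz, Submodule.mem_colon_singleton, Submodule.mem_bot]
    have hz0 : z ≠ 0 := by
      rintro rfl
      exact hPp.ne_top ((Ideal.eq_top_iff_one P).mpr ((hz' 1).mpr (smul_zero _)))
    have hxP : x ∉ P := by
      intro h
      exact hz0 (hx (by simpa using (hz' x).mp h))
    let T : Submodule R M :=
      { carrier := {y | ∀ p ∈ P, p • y = 0}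
        add_mem' := by
          intro a b ha hb p hp
          rw [smul_add, ha p hp, hb p hp, add_zero]
        zero_mem' := fun p _ => smul_zero p
        smul_mem' := by
          intro c a ha p hp
          rw [smul_comm, ha p hp, smul_zero] }
    have hzT : z ∈ T := fun p hp => (hz' p).mp hp
    have hT : ¬ T ≤ x • (⊤ : Submodule R M) := by
      intro hle
      have : T = ⊥ := by
        apply Submodule.eq_bot_of_le_smul_of_le_jacobson_bot (maximalIdeal R) _
          (IsNoetherian.noetherian _)
        · intro y hy
          obtain ⟨t, -, rfl⟩ := hle hy
          refine Submodule.smul_mem_smul hxm ?_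
          intro p hp
          apply hx
          show x • p • t = x • 0
          rw [smul_comm, smul_zero]
          exact hy p hp
        · exact IsLocalRing.maximalIdeal_le_jacobson _
      rw [this] at hzT
      exact hz0 ((Submodule.mem_bot R).mp hzT)
    obtain ⟨y, hyT, hy⟩ := SetLike.not_le_iff_exists.mp hT
    let y' : QuotSMulTop x M := Submodule.Quotient.mk y
    have hy' : y' ≠ 0 := fun h => hy ((Submodule.Quotient.mk_eq_zero _).mp h)
    obtain ⟨Q, hQ, hle⟩ := exists_le_isAssociatedPrime_of_isNoetherianRing R y' hy'
    have hPQ : P ≤ Q := by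
      intro p hp
      apply hle
      rw [Submodule.mem_colon_singleton, Submodule.mem_bot]
      show (Submodule.Quotient.mk (p • y) : QuotSMulTop x M) = 0
      rw [hyT p hp]; rfl
    have hxQ : x ∈ Q := by
      apply hle
      rw [Submodule.mem_colon_singleton, Submodule.mem_bot]
      exact Module.mem_annihilator.mp (QuotSMulTop.mem_annihilator M x) y'
    have h1 := ih (QuotSMulTop x M) (fun r hr => hmem r (List.mem_cons_of_mem _ hr)) hrs Q hQ
    have h2 : ringKrullDim (R ⧸ Q) + 1 ≤ ringKrullDim (R ⧸ P) := by
      apply ringKrullDim_succ_le_of_surjective (Ideal.Quotient.factor hPQ)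
        (Ideal.Quotient.factor_surjective hPQ) (r := Ideal.Quotient.mk P x)
      · rw [mem_nonZeroDivisors_iff_ne_zero]
        exact fun h => hxP (Ideal.Quotient.eq_zero_iff_mem.mp h)
      · rw [Ideal.Quotient.factor_mk]
        exact Ideal.Quotient.eq_zero_iff_mem.mpr hxQ
    refine le_trans ?_ h2
    rw [List.length_cons, Nat.cast_add, Nat.cast_one]
    exact ENat.WithBot.add_le_add_one_right_iff.mpr h1

lemma smul_top_lt {M : Type u} [AddCommGroup M] [Module R M] [Module.Finite R M] [Nontrivial M] :
    maximalIdeal R • (⊤ : Submodule R M) < ⊤ := by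
  rw [lt_top_iff_ne_top]
  intro h
  have := Submodule.eq_bot_of_le_smul_of_le_jacobson_bot (maximalIdeal R) (⊤ : Submodule R M)
    Module.Finite.fg_top h.ge (IsLocalRing.maximalIdeal_le_jacobson _)
  exact bot_ne_top this.symm

lemma exchange {M : Type u} [AddCommGroup M] [Module R M] [Module.Finite R M] {n : ℕ}
    (h : ∃ rs : List R, rs.length = n + 1 ∧ (∀ r ∈ rs, r ∈ maximalIdeal R) ∧ IsRegular M rs)
    {r : R} (hr : r ∈ maximalIdeal R) (hreg : IsSMulRegular M r) :
    ∃ rs : List R, rs.length = n ∧ (∀ r ∈ rs, r ∈ maximalIdeal R) ∧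
      IsRegular (QuotSMulTop r M) rs := by
  obtain ⟨rs, hlen, hmem, hrs⟩ := h
  have hnt : Nontrivial M := hrs.nontrivial
  have hntq : Nontrivial (QuotSMulTop r M) := by
    rw [Submodule.Quotient.nontrivial_iff]
    refine ne_top_of_le_ne_top (smul_top_lt (R := R) (M := M)).ne ?_
    rw [← Submodule.ideal_span_singleton_smul]
    exact Submodule.smul_mono_left ((Ideal.span_singleton_le_iff_mem _).mpr hr)
  let N := ModuleCat.of R (R ⧸ maximalIdeal R)
  have hsupp : Module.support R N = PrimeSpectrum.zeroLocus (maximalIdeal R) := by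
    rw [Module.support_eq_zeroLocus]
    congr 1
    exact congrArg _ (Ideal.annihilator_quotient)
  have hext := ModuleCat.subsingleton_ext_of_exists_isRegular (maximalIdeal R) N hsupp.le
    (ModuleCat.of R M) smul_top_lt rs hmem hrs
  rw [hlen] at hext
  refine ModuleCat.exists_isRegular_of_exists_subsingleton_ext (maximalIdeal R) n
    (ModuleCat.of R (QuotSMulTop r M)) smul_top_lt N hsupp ?_
  intro i hi
  have zero1 := AddCommGrpCat.isZero_of_iff_subsingleton.mpr (hext i (by omega))
  have zero2 := AddCommGrpCat.isZero_of_iff_subsingleton.mpr (hext (i + 1) (by omega))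
  have hreg' : IsSMulRegular (ModuleCat.of R M) r := hreg
  exact AddCommGrpCat.subsingleton_of_isZero <| ShortComplex.Exact.isZero_of_both_zeros
    ((Ext.covariant_sequence_exact₃' N hreg'.smulShortComplex_shortExact) i (i + 1) rfl)
    (zero1.eq_zero_of_src _) (zero2.eq_zero_of_tgt _)

lemma exists_le_ass_of_no_regular {M : Type u} [AddCommGroup M] [Module R M] [Module.Finite R M]
    (P : Ideal R) (h : ∀ r ∈ P, ¬ IsSMulRegular M r) : ∃ Q ∈ associatedPrimes R M, P ≤ Q := by
  have hsub : (P : Set R) ⊆ ⋃ i ∈ associatedPrimes R M, (i : Set R) := by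
    intro r hr
    have := biUnion_associatedPrimes_eq_zero_divisors R M
    rw [this]
    by_contra hcon
    apply h r hr
    rw [isSMulRegular_iff_right_eq_zero_of_smul]
    intro z hz
    by_contra hz0
    exact hcon ⟨z, hz0, hz⟩
  rw [Ideal.subset_union_prime_finite (associatedPrimes.finite R M) ⊤ ⊤
    (fun i hi _ _ => hi.isPrime)] at hsub
  exact hsub

lemma exists_seq_ass_aux {n : ℕ} (M : Type u) [AddCommGroup M] [Module R M] [Module.Finite R M]
    (hrs : ∃ rs : List R, rs.length = n ∧ (∀ r ∈ rs, r ∈ maximalIdeal R) ∧ IsRegular M rs)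
    (hdim : Module.supportDim R M ≤ n) (P : PrimeSpectrum R) (hP : P ∈ Module.support R M)
    (hc : ∀ r ∈ P.asIdeal, ¬ IsSMulRegular M r) :
    ∃ ys : List R, (∀ y ∈ ys, y ∈ P.asIdeal) ∧ IsRegular M ys ∧
      P.asIdeal ∈ associatedPrimes R (M ⧸ (Ideal.ofList ys • ⊤ : Submodule R M)) := by
  obtain ⟨rs, hlen, hmem, hrs⟩ := hrs
  have hnt : Nontrivial M := hrs.nontrivial
  obtain ⟨Q, hQ, hPQ⟩ := exists_le_ass_of_no_regular P.asIdeal hc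
  have h1 := length_le_dim_of_ass rs M hmem hrs Q hQ
  have hann : Module.annihilator R M ≤ P.asIdeal := by
    rw [Module.support_eq_zeroLocus] at hP
    exact hP
  have h2 : ringKrullDim (R ⧸ P.asIdeal) ≤ n := by
    refine le_trans ?_ hdim
    rw [Module.supportDim_eq_ringKrullDim_quotient_annihilator]
    exact ringKrullDim_le_of_surjective (Ideal.Quotient.factor hann)
      (Ideal.Quotient.factor_surjective hann)
  have hPe : P.asIdeal = Q := by
    by_contra hne
    obtain ⟨x, hxQ, hxP⟩ := SetLike.exists_of_lt (lt_of_le_of_ne hPQ hne)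
    have h3 : ringKrullDim (R ⧸ Q) + 1 ≤ ringKrullDim (R ⧸ P.asIdeal) := by
      apply ringKrullDim_succ_le_of_surjective (Ideal.Quotient.factor hPQ)
        (Ideal.Quotient.factor_surjective hPQ) (r := Ideal.Quotient.mk P.asIdeal x)
      · rw [mem_nonZeroDivisors_iff_ne_zero]
        exact fun h => hxP (Ideal.Quotient.eq_zero_iff_mem.mp h)
      · rw [Ideal.Quotient.factor_mk]
        exact Ideal.Quotient.eq_zero_iff_mem.mpr hxQ
    rw [hlen] at h1
    have h4 := ((ENat.WithBot.add_le_add_one_right_iff.mpr h1).trans h3).trans h2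
    have : n + 1 ≤ n := by exact_mod_cast h4
    omega
  refine ⟨[], by simp, IsRegular.nil R M, ?_⟩
  rw [hPe]
  have e : (M ⧸ (Ideal.ofList ([] : List R) • ⊤ : Submodule R M)) ≃ₗ[R] M :=
    Submodule.quotEquivOfEqBot _ (by rw [Ideal.ofList_nil, Submodule.bot_smul])
  rw [LinearEquiv.AssociatedPrimes.eq e]
  exact hQ

lemma exists_seq_ass {n : ℕ} : ∀ (M : Type u) [AddCommGroup M] [Module R M] [Module.Finite R M],
    (∃ rs : List R, rs.length = n ∧ (∀ r ∈ rs, r ∈ maximalIdeal R) ∧ IsRegular M rs) →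
    Module.supportDim R M ≤ n → ∀ P : PrimeSpectrum R, P ∈ Module.support R M →
    ∃ ys : List R, (∀ y ∈ ys, y ∈ P.asIdeal) ∧ IsRegular M ys ∧
      P.asIdeal ∈ associatedPrimes R (M ⧸ (Ideal.ofList ys • ⊤ : Submodule R M)) := by
  induction n with
  | zero =>
    intro M _ _ _ hrs hdim P hP
    by_cases hc : ∀ r ∈ P.asIdeal, ¬ IsSMulRegular M r
    · exact exists_seq_ass_aux M hrs hdim P hP hc
    · push Not at hc
      obtain ⟨r, hrP, hr⟩ := hc
      have hrm : r ∈ maximalIdeal R := le_maximalIdeal P.isPrime.ne_top hrP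
      have h1 := Module.supportDim_quotSMulTop_succ_eq_supportDim hr hrm
      rw [← h1] at hdim
      have hPq : P ∈ Module.support R (QuotSMulTop r M) := by
        rw [Module.support_quotSMulTop]
        exact ⟨hP, by simpa using hrP⟩
      have hne : Nonempty (Module.support R (QuotSMulTop r M)) := ⟨⟨P, hPq⟩⟩
      exfalso
      have h2 : 0 ≤ Module.supportDim R (QuotSMulTop r M) := Order.krullDim_nonneg
      have h3 : (0 : WithBot ℕ∞) + 1 ≤ 0 := (ENat.WithBot.add_le_add_one_right_iff.mpr h2).trans hdim
      exact absurd h3 (by decide)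
  | succ n ih =>
    intro M _ _ _ hrs hdim P hP
    by_cases hc : ∀ r ∈ P.asIdeal, ¬ IsSMulRegular M r
    · exact exists_seq_ass_aux M hrs hdim P hP hc
    · push Not at hc
      obtain ⟨r, hrP, hr⟩ := hc
      have hrm : r ∈ maximalIdeal R := le_maximalIdeal P.isPrime.ne_top hrP
      have h1 := Module.supportDim_quotSMulTop_succ_eq_supportDim hr hrm
      rw [← h1, Nat.cast_add, Nat.cast_one, ENat.WithBot.add_le_add_one_right_iff] at hdim
      have hPq : P ∈ Module.support R (QuotSMulTop r M) := by
        rw [Module.support_quotSMulTop]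
        exact ⟨hP, by simpa using hrP⟩
      obtain ⟨ys, h1, h2, h3⟩ := ih (QuotSMulTop r M) (exchange hrs hrm hr) hdim P hPq
      refine ⟨r :: ys, ?_, IsRegular.cons hr h2, ?_⟩
      · intro y hy
        rcases List.mem_cons.mp hy with rfl | hy
        · exact hrP
        · exact h1 y hy
      · rw [LinearEquiv.AssociatedPrimes.eq
          (Submodule.quotOfListConsSMulTopEquivQuotSMulTopInner M r ys)]
        exact h3

end CMPart

section FlatPart
universe u v
open RingTheory.Sequence

lemma EV.quot_list {R : Type u} [CommRing R] {B : Type v} [AddCommGroup B] [Module R B]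
    (y : List R) : IsWeaklyRegular R y → IsWeaklyRegular B y → ∀ i : ℕ,
    EV R (CharacterModule B) (R ⧸ (Ideal.ofList y • ⊤ : Submodule R R)) (i + 1) := by
  induction y using List.reverseRecOn with
  | nil =>
    intro _ _ i
    exact EV.congr (Submodule.quotEquivOfEqBot _ (by simp)).symm (EV.of_projective i)
  | append_singleton y x ih =>
    intro hR hB
    rw [isWeaklyRegular_append_iff, isWeaklyRegular_singleton_iff] at hR hB
    obtain ⟨hR1, hR2⟩ := hR
    obtain ⟨hB1, hB2⟩ := hB
    have ih := ih hR1 hB1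
    let N := R ⧸ (Ideal.ofList y • ⊤ : Submodule R R)
    have e1 : (Ideal.ofList (y ++ [x]) • ⊤ : Submodule R R) = Ideal.ofList (x :: y) • ⊤ := by
      congr 1
      rw [Ideal.ofList_append, Ideal.ofList_singleton, Ideal.ofList_cons, sup_comm]
    let e : (R ⧸ (Ideal.ofList (y ++ [x]) • ⊤ : Submodule R R)) ≃ₗ[R] QuotSMulTop x N :=
      (Submodule.quotEquivOfEq _ _ e1).trans
        (Submodule.quotOfListConsSMulTopEquivQuotSMulTopOuter R x y)
    let f : N →ₗ[R] N := LinearMap.lsmul R N x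
    let g : N →ₗ[R] QuotSMulTop x N := Submodule.mkQ _
    have hf : Function.Injective f := hR2
    have hg : Function.Surjective g := Submodule.mkQ_surjective _
    have hex : Function.Exact f g := by
      intro z
      simp only [g, f, Submodule.mkQ_apply, Submodule.Quotient.mk_eq_zero,
        Submodule.mem_smul_pointwise_iff_exists]
      simp
    have hs : Function.Surjective (f.lcomp R (CharacterModule B)) := by
      rw [← rTensor_injective_iff_lcomp_surjective]
      have hre : IsSMulRegular (TensorProduct R N B) x := by
        have e2 : (Ideal.ofList y • ⊤ : Submodule R R) = Ideal.ofList y := by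
          rw [smul_eq_mul, Ideal.mul_top]
        let E1 : TensorProduct R N B ≃ₗ[R] B ⧸ (Ideal.ofList y • ⊤ : Submodule R B) :=
          (TensorProduct.congr (Submodule.quotEquivOfEq _ _ e2) (LinearEquiv.refl R B)).trans
            (TensorProduct.quotTensorEquivQuotSMul B (Ideal.ofList y))
        exact (E1.isSMulRegular_congr x).mpr hB2
      have : f.rTensor B = LinearMap.lsmul R (TensorProduct R N B) x := by
        ext a b
        simp [f, TensorProduct.smul_tmul']
      rw [this]
      exact hre
    intro i
    refine EV.congr e.symm ?_
    cases i with
    | zero => exact EV.right_zero hex hf hg hs (ih 0)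
    | succ i => exact EV.right hex hf hg (ih i) (ih (i + 1))

lemma Rg.vanish {R : Type u} [CommRing R] [IsLocalRing R] {d : ℕ} (hd : Rg R d)
    {B : Type v} [AddCommGroup B] [Module R B]
    (hB : ∀ ys : List R, (∀ y ∈ ys, y ∈ maximalIdeal R) → IsRegular R ys → IsWeaklyRegular B ys)
    (j : ℕ) : ∀ i : ℕ, d < i + 1 + j → ∀ (M : Type u) [AddCommGroup M] [Module R M]
      [Module.Finite R M], EV R (CharacterModule B) M (i + 1) := by
  have hN : IsNoetherianRing R := hd.1
  induction j with
  | zero =>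
    intro i hi M _ _ _
    exact PD.ev (hd.pd M) _ (by omega)
  | succ j ih =>
    intro i hi M _ _ hM
    induction hM using IsNoetherianRing.induction_on_isQuotientEquivQuotientPrime R with
    | subsingleton N => exact EV.of_subsingleton _
    | exact N₁ N₂ N₃ f g hf hg hfg h₁ h₃ => exact EV.mid hfg hf hg h₁ h₃
    | quotient N p e =>
      refine EV.congr e.symm ?_
      have hsup : Module.supportDim R R ≤ d := by
        rw [Module.supportDim_self_eq_ringKrullDim, hd.dim]
      obtain ⟨ys, hys, hreg, hass⟩ := exists_seq_ass R hd.exists_seq hsup p (by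
        rw [Module.support_eq_zeroLocus, Module.annihilator_eq_bot.mpr inferInstance]
        simp)
      have hprime := hass.isPrime
      have hym : ∀ y ∈ ys, y ∈ maximalIdeal R := fun y hy =>
        le_maximalIdeal p.2.ne_top (hys y hy)
      have h8 := EV.quot_list (B := B) ys hreg.toIsWeaklyRegular (hB ys hym hreg)
      obtain ⟨f, hf⟩ := (isAssociatedPrime_iff_exists_injective_linearMap _ _).mp hass |>.2
      refine EV.left (f := f) (g := f.range.mkQ) ?_ hf (Submodule.mkQ_surjective _) (h8 i)
        (ih (i + 1) (by omega) _)
      exact LinearMap.exact_map_mkQ_range f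

lemma Rg.flat {R : Type u} [CommRing R] [IsLocalRing R] {d : ℕ} (hd : Rg R d)
    {B : Type v} [AddCommGroup B] [Module R B]
    (hB : ∀ ys : List R, (∀ y ∈ ys, y ∈ maximalIdeal R) → IsRegular R ys → IsWeaklyRegular B ys) :
    Module.Flat R B := by
  have hN : IsNoetherianRing R := hd.1
  rw [Module.Flat.iff_rTensor_injective']
  intro J
  rw [rTensor_injective_iff_lcomp_surjective]
  have := hd.vanish hB d 0 (by omega) (R ⧸ J)
  exact EV.lcomp_surjective (f := J.subtype) (g := J.mkQ) (LinearMap.exact_subtype_mkQ J)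
    (Submodule.subtype_injective _) (Submodule.mkQ_surjective _) this

end FlatPart

section BCMPart
universe u v
open RingTheory.Sequence

lemma dim_eq_of_integral {R S : Type*} [CommRing R] [CommRing S] [Algebra R S]
    [Algebra.IsIntegral R S] (hinj : Function.Injective (algebraMap R S)) :
    ringKrullDim S = ringKrullDim R := by
  apply le_antisymm
  · refine Order.krullDim_le_of_strictMono (PrimeSpectrum.comap (algebraMap R S)) ?_
    intro P Q hPQ
    exact Ideal.IsIntegral.comap_lt_comap (R := R) (I := P.asIdeal) (J := Q.asIdeal) hPQ
  · refine iSup_le fun l => ?_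
    obtain ⟨Q, -, hQ, hQ'⟩ := Ideal.exists_ideal_over_prime_of_isIntegral
      (RelSeries.head l).asIdeal (⊥ : Ideal S) (by
        rw [← RingHom.ker_eq_comap_bot, (RingHom.injective_iff_ker_eq_bot _).mp hinj]
        exact bot_le)
    have : Q.LiesOver (RelSeries.head l).asIdeal := ⟨hQ'.symm⟩
    obtain ⟨L, hL, -⟩ := Ideal.exists_ltSeries_of_hasGoingUp l Q
    rw [← hL]
    exact le_iSup (fun p : LTSeries (PrimeSpectrum S) => (p.length : WithBot ℕ∞)) L

lemma exists_sop_extend {R : Type*} [CommRing R] [IsLocalRing R] [IsNoetherianRing R]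
    (ys : List R) (hy : ∀ y ∈ ys, y ∈ maximalIdeal R) (hreg : IsRegular R ys) :
    ∃ zs : List R, ((ys ++ zs).length : WithBot ℕ∞) = ringKrullDim R ∧
      (∀ y ∈ ys ++ zs, y ∈ maximalIdeal R) ∧
      maximalIdeal R ≤ (Ideal.ofList (ys ++ zs)).radical := by
  have hle : Ideal.ofList ys ≤ maximalIdeal R := Ideal.span_le.mpr hy
  have hne : Ideal.ofList ys ≠ ⊤ := fun h =>
    (maximalIdeal.isMaximal R).ne_top (top_le_iff.mp (h ▸ hle))
  have hnt : Nontrivial (R ⧸ Ideal.ofList ys) := Ideal.Quotient.nontrivial_iff.mpr hne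
  let q := Ideal.Quotient.mk (Ideal.ofList ys)
  have hsurj : Function.Surjective q := Ideal.Quotient.mk_surjective
  have hl : IsLocalRing (R ⧸ Ideal.ofList ys) := .of_surjective' q hsurj
  have hlh : IsLocalHom q := IsLocalHom.of_surjective _ hsurj
  obtain ⟨s, hs, hcard⟩ := Ideal.exists_finset_card_eq_height_of_isNoetherianRing
    (maximalIdeal (R ⧸ Ideal.ofList ys))
  let t := Function.surjInv hsurj
  have ht : ∀ r, q (t r) = r := Function.surjInv_eq hsurj
  have hdim := ringKrullDim_add_length_eq_ringKrullDim_of_isRegular ys hreg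
  have hmap : (Ideal.ofList (s.toList.map t)).map q = Ideal.span (s : Set _) := by
    rw [Ideal.map_ofList, List.map_map]
    have : q ∘ t = id := funext ht
    rw [this, List.map_id]
    simp [Ideal.ofList]
  refine ⟨s.toList.map t, ?_, ?_, ?_⟩
  · rw [← hdim, ← IsLocalRing.maximalIdeal_height_eq_ringKrullDim, ← hcard]
    simp [add_comm]
  · intro y hy'
    rcases List.mem_append.mp hy' with h | h
    · exact hy y h
    · obtain ⟨r, hr, rfl⟩ := List.mem_map.mp h
      have : q (t r) ∈ maximalIdeal (R ⧸ Ideal.ofList ys) := by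
        rw [ht]
        exact hs.1.2 (Ideal.subset_span (by simpa using hr))
      exact fun hu => this (hu.map q)
  · intro r hr
    have hr' : q r ∈ (Ideal.span (s : Set (R ⧸ Ideal.ofList ys))).radical := by
      rw [Ideal.radical_eq_sInf, Submodule.mem_sInf]
      rintro P ⟨hP, hP'⟩
      have : maximalIdeal (R ⧸ Ideal.ofList ys) ≤ P :=
        hs.2 ⟨hP', hP⟩ (le_maximalIdeal hP'.ne_top)
      exact this (fun hu => hr (isUnit_of_map_unit q r hu))
    obtain ⟨n, hn⟩ := hr'
    refine ⟨n, ?_⟩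
    rw [← hmap, ← map_pow] at hn
    have := Ideal.mem_comap.mpr hn
    rw [Ideal.comap_map_of_surjective q hsurj] at this
    rw [Ideal.ofList_append, sup_comm]
    have hk : Ideal.comap q ⊥ = Ideal.ofList ys := by
      rw [← RingHom.ker_eq_comap_bot]; exact Ideal.mk_ker
    rwa [hk] at this

lemma weaklyRegular_of_bcm {R S : Type*} {B : Type*} [CommRing R] [IsLocalRing R]
    [IsNoetherianRing R]
    [CommRing S] [IsLocalRing S] [Algebra R S] [Algebra.IsIntegral R S]
    (hinj : Function.Injective (algebraMap R S)) [CommRing B] [Algebra S B] [Algebra R B]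
    [IsScalarTower R S B]
    (hB : ∀ xs : List S, (xs.length : WithBot ℕ∞) = ringKrullDim S →
      (∀ x ∈ xs, x ∈ maximalIdeal S) →
      (Ideal.span {x : S | x ∈ xs}).radical = maximalIdeal S →
      IsRegular B (xs.map (algebraMap S B)))
    (ys : List R) (hy : ∀ y ∈ ys, y ∈ maximalIdeal R) (hreg : IsRegular R ys) :
    IsWeaklyRegular B ys := by
  obtain ⟨zs, hlen, hmem, hrad⟩ := exists_sop_extend ys hy hreg
  have hcomap : (maximalIdeal S).comap (algebraMap R S) = maximalIdeal R :=
    eq_maximalIdeal (Ideal.isMaximal_comap_of_isIntegral_of_isMaximal (R := R) (maximalIdeal S))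
  have hmemS : ∀ x ∈ (ys ++ zs).map (algebraMap R S), x ∈ maximalIdeal S := by
    intro x hx
    obtain ⟨r, hr, rfl⟩ := List.mem_map.mp hx
    have := hmem r hr
    rw [← hcomap] at this
    exact this
  have key := hB ((ys ++ zs).map (algebraMap R S))
    (by rw [List.length_map, hlen, dim_eq_of_integral hinj]) hmemS (by
      apply le_antisymm
      · rw [(Ideal.IsPrime.radical_le_iff inferInstance)]
        exact Ideal.span_le.mpr hmemS
      · rw [Ideal.radical_eq_sInf]
        refine le_sInf ?_
        rintro P ⟨hP, hP'⟩
        have h1 : maximalIdeal R ≤ P.comap (algebraMap R S) := by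
          refine hrad.trans ?_
          rw [(Ideal.IsPrime.radical_le_iff inferInstance)]
          refine Ideal.span_le.mpr fun r hr => ?_
          exact hP (Ideal.subset_span (List.mem_map_of_mem hr))
        have h2 : P.comap (algebraMap R S) = maximalIdeal R :=
          ((maximalIdeal.isMaximal R).eq_of_le (Ideal.IsPrime.ne_top inferInstance) h1).symm
        have h3 : P.IsMaximal := Ideal.isMaximal_of_isIntegral_of_isMaximal_comap (R := R) P
          (h2 ▸ maximalIdeal.isMaximal R)
        exact (eq_maximalIdeal h3).ge)
  have k2 : IsWeaklyRegular B ((ys ++ zs).map (algebraMap R B)) := by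
    have := key.toIsWeaklyRegular
    rw [List.map_map] at this
    rwa [IsScalarTower.algebraMap_eq R S B]
  rw [isWeaklyRegular_map_algebraMap_iff, isWeaklyRegular_append_iff] at k2
  exact k2.1

/-- Flat extension preserves colon by an element regular modulo `J`. -/
lemma mem_map_of_flat {R B : Type*} [CommRing R] [CommRing B] [Algebra R B] [Module.Flat R B]
    (J : Ideal R) (c : R) (hc : ∀ x, c * x ∈ J → x ∈ J) (b : B)
    (hb : algebraMap R B c * b ∈ J.map (algebraMap R B)) : b ∈ J.map (algebraMap R B) := by
  have h1 : IsSMulRegular (R ⧸ J) c := by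
    rw [isSMulRegular_iff_right_eq_zero_of_smul]
    intro x hx
    obtain ⟨x, rfl⟩ := Ideal.Quotient.mk_surjective x
    rw [Ideal.Quotient.eq_zero_iff_mem]
    apply hc
    rw [← Ideal.Quotient.eq_zero_iff_mem]
    exact hx
  have h2 : Function.Injective ((LinearMap.lsmul R (R ⧸ J) c).rTensor B) :=
    Module.Flat.rTensor_preserves_injective_linearMap _ h1
  have h3 : (LinearMap.lsmul R (R ⧸ J) c).rTensor B =
      LinearMap.lsmul R (TensorProduct R (R ⧸ J) B) c := by
    ext a b
    simp [TensorProduct.smul_tmul']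
  rw [h3] at h2
  have h4 : IsSMulRegular (TensorProduct R (R ⧸ J) B) c := h2
  have h5 : IsSMulRegular (B ⧸ (J • ⊤ : Submodule R B)) c :=
    ((TensorProduct.quotTensorEquivQuotSMul B J).isSMulRegular_congr c).mp h4
  have hJ : ∀ x : B, x ∈ (J • ⊤ : Submodule R B) ↔ x ∈ J.map (algebraMap R B) := by
    intro x
    rw [Ideal.smul_top_eq_map]
    rfl
  rw [← Algebra.smul_def, ← hJ] at hb
  rw [← hJ]
  rw [← Submodule.Quotient.mk_eq_zero] at hb ⊢
  rw [isSMulRegular_iff_right_eq_zero_of_smul] at h5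
  apply h5
  rw [← Submodule.Quotient.mk_smul]
  exact hb

end BCMPart

lemma symbolicPower_le {R : Type*} [CommRing R] (I : Ideal R) (n : ℕ) :
    I ^ n ≤ symbolicPower I n := Ideal.le_comap_map

lemma symbolicPower_colon {R : Type*} [CommRing R] (I : Ideal R) (n : ℕ) (c : R)
    (hc : c ∈ assPrimesCompl I) (x : R) (hx : c * x ∈ symbolicPower I n) :
    x ∈ symbolicPower I n := by
  unfold symbolicPower at hx ⊢
  rw [Ideal.mem_comap] at hx ⊢
  rw [map_mul] at hx
  exact ((Ideal.unit_mul_mem_iff_mem _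
    (IsLocalization.map_units (Localization (assPrimesCompl I)) ⟨c, hc⟩)).mp hx)

theorem stmt10 {R : Type*} [CommRing R] [IsDomain R] [IsLocalRing R]
    (hreg : IsRegularLocal R) [IsAdicComplete (maximalIdeal R) R]
    (I : Ideal R) (M h n : ℕ) (hM : 1 ≤ M) (hh : 1 ≤ h) (hn : 1 ≤ n) (s : Fin n → ℕ)
    (u : R) (hu : u ∈ symbolicPower I M)
    (v : AlgebraicClosure (FractionRing R))
    (hv : v ^ M = algebraMap R (AlgebraicClosure (FractionRing R)) u)
    (L : IntermediateField (FractionRing R) (AlgebraicClosure (FractionRing R)))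
    (hL : L = IntermediateField.adjoin (FractionRing R) {v})
    (v' : L) (hv' : (v' : AlgebraicClosure (FractionRing R)) = v)
    (R' : Subalgebra R L)
    (hR' : R' = (integralClosure (Algebra.adjoin R {v'}) L).restrictScalars R)
    (w : R') (hw : (w : L) = v')
    (B : Type*) [CommRing B] [Algebra R' B] [Algebra R B] [IsScalarTower R R' B]
    (hloc : IsLocalRing R') (hB : IsBigCohenMacaulay R' hloc B)
    (hc : ∀ p, p ∈ associatedPrimes R (R ⧸ I) → ∃ c : R, c ∉ p ∧
      ∀ i : Fin n, algebraMap R B c * algebraMap R' B w ^ (s i + h) ∈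
        Ideal.map (algebraMap R B) (I ^ (s i + 1))) :
    ∀ i : Fin n, algebraMap R' B w ^ (s i + h) ∈
      Ideal.map (algebraMap R B) (symbolicPower I (s i + 1)) := by
  classical
  obtain ⟨hN, hl, t, ht, htc⟩ := hreg
  have hRg : Rg R t.card := ⟨hN, t, ht, le_rfl, htc.le⟩
  have hv'M : v' ^ M = algebraMap R L u := by
    apply (algebraMap L (AlgebraicClosure (FractionRing R))).injective
    rw [map_pow, IsScalarTower.algebraMap_apply R (FractionRing R) L,
      ← IsScalarTower.algebraMap_apply (FractionRing R) L (AlgebraicClosure (FractionRing R)),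
      ← IsScalarTower.algebraMap_apply R (FractionRing R) (AlgebraicClosure (FractionRing R))]
    change (v' : AlgebraicClosure (FractionRing R)) ^ M = _
    rw [hv', hv]
  have hv'int : IsIntegral R v' :=
    IsIntegral.of_pow hM (hv'M ▸ isIntegral_algebraMap)
  have hadj : Algebra.IsIntegral R (Algebra.adjoin R {v'}) :=
    Algebra.IsIntegral.adjoin (by simpa using hv'int)
  have hInteg : Algebra.IsIntegral R R' := by
    constructor
    intro x
    have hx : IsIntegral (Algebra.adjoin R {v'}) (x : L) := by
      have hle := hR'.le
      exact hle x.2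
    have hx2 : IsIntegral R (x : L) := isIntegral_trans _ hx
    exact (isIntegral_algebraMap_iff (B := L) (x := x) Subtype.val_injective).mp hx2
  have hinjL : Function.Injective (algebraMap R L) := by
    rw [IsScalarTower.algebraMap_eq R (FractionRing R) L]
    exact (algebraMap (FractionRing R) L).injective.comp (IsFractionRing.injective R _)
  have hinj : Function.Injective (algebraMap R R') := by
    intro a b hab
    apply hinjL
    exact congrArg Subtype.val hab
  have hflat : Module.Flat R B := hRg.flat fun ys hy hys =>
    weaklyRegular_of_bcm (S := R') hinj hB ys hy hys
  let 𝔞 : Ideal R := ⨅ i : Fin n,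
    ((Ideal.map (algebraMap R B) (I ^ (s i + 1))).colon
      {algebraMap R' B w ^ (s i + h)}).comap (algebraMap R B)
  have hmem : ∀ c : R, c ∈ 𝔞 ↔ ∀ i : Fin n, algebraMap R B c * algebraMap R' B w ^ (s i + h) ∈
        Ideal.map (algebraMap R B) (I ^ (s i + 1)) := by
    intro c
    simp only [𝔞, Submodule.mem_iInf, Ideal.mem_comap, Submodule.mem_colon_singleton, smul_eq_mul]
  obtain ⟨c, hca, hcW⟩ : ∃ c ∈ 𝔞, c ∈ assPrimesCompl I := by
    by_contra hcon
    push Not at hcon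
    have hsub : (𝔞 : Set R) ⊆ ⋃ p ∈ associatedPrimes R (R ⧸ I), ((id p : Ideal R) : Set R) := by
      intro c hcm
      by_contra hcn
      apply hcon c hcm
      intro p hp hcp
      apply hcn
      simp only [Set.mem_iUnion]
      exact ⟨p, hp, hcp⟩
    obtain ⟨p, hp, hle⟩ := (Ideal.subset_union_prime_finite
      (associatedPrimes.finite R (R ⧸ I)) ⊤ ⊤ (fun i hi _ _ => hi.isPrime)).mp hsub
    obtain ⟨c, hcp, hci⟩ := hc p hp
    exact hcp (hle ((hmem c).mpr hci))
  intro i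
  exact mem_map_of_flat _ c (symbolicPower_colon I _ c hcW) _
    (Ideal.map_mono (symbolicPower_le I _) ((hmem c).mp hca i))
end

section
/- Let (R, m) be a complete regular local domain, let u ∈ m, and let M ≥ 2 be an integer. Let v be an element of an algebraic closure of Frac(R) with v^M = u, let R' be the integral closure of R[v] in Frac(R)(v), and let B be a big Cohen–Macaulay algebra over R'. Let K ⊆ R be an ideal. If the image of v^{M−1} in B lies in K·B, then u ∈ m·K. -/
set_option synthInstance.maxHeartbeats 1000000
set_option maxHeartbeats 2000000

open Ideal IsLocalRing

open scoped TensorProduct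

section core
variable {R : Type*} [CommRing R]

lemma tens_mem {I : Ideal R} {N : Type*} [AddCommGroup N] [Module R N] (xs : List I) (x : I)
    (b : N) (hb : b ∈ (Ideal.ofList (xs.map (fun i : I => (i : R))) • ⊤ : Submodule R N)) :
    (x ⊗ₜ[R] b : I ⊗[R] N) ∈
      Submodule.span R {t : I ⊗[R] N | ∃ y ∈ xs, ∃ n : N, t = y ⊗ₜ[R] n} := by
  set S := Submodule.span R {t : I ⊗[R] N | ∃ y ∈ xs, ∃ n : N, t = y ⊗ₜ[R] n} with hS
  have hle : (Ideal.ofList (xs.map (fun i : I => (i : R))) • ⊤ : Submodule R N) ≤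
      S.comap (TensorProduct.mk R I N x) := by
    rw [Submodule.smul_le]
    intro r hr n _
    rw [Submodule.mem_comap, TensorProduct.mk_apply]
    induction hr using Submodule.span_induction with
    | mem r hr =>
      obtain ⟨y, hy, rfl⟩ := List.mem_map.1 hr
      have : (x ⊗ₜ[R] ((y : R) • n) : I ⊗[R] N) = y ⊗ₜ[R] ((x : R) • n) := by
        rw [← TensorProduct.smul_tmul, ← TensorProduct.smul_tmul]
        congr 1
        ext
        simp [mul_comm]
      rw [this]
      exact Submodule.subset_span ⟨y, hy, _, rfl⟩
    | zero => simp
    | add a b _ _ ha hb => rw [add_smul, TensorProduct.tmul_add]; exact S.add_mem ha hb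
    | smul r a _ ha => rw [smul_assoc, TensorProduct.tmul_smul]; exact S.smul_mem _ ha
  exact hle hb

lemma tens_inj_aux {I : Ideal R} {N : Type*} [AddCommGroup N] [Module R N] (xs : List I)
    (h : RingTheory.Sequence.IsWeaklyRegular N (xs.map (fun i : I => (i : R)))) :
    ∀ z ∈ Submodule.span R {t : I ⊗[R] N | ∃ y ∈ xs, ∃ n : N, t = y ⊗ₜ[R] n},
      TensorProduct.lift ((LinearMap.lsmul R N).comp I.subtype) z = 0 → z = 0 := by
  induction xs using List.reverseRecOn with
  | nil => intro z hz _; simpa using hz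
  | append_singleton xs x ih =>
    intro z hz h0
    rw [List.map_append, RingTheory.Sequence.isWeaklyRegular_append_iff] at h
    obtain ⟨h1, h2⟩ := h
    simp only [List.map_cons, List.map_nil,
      RingTheory.Sequence.isWeaklyRegular_singleton_iff] at h2
    have key : ∃ z' ∈ Submodule.span R {t : I ⊗[R] N | ∃ y ∈ xs, ∃ n : N, t = y ⊗ₜ[R] n},
        ∃ b : N, z = z' + x ⊗ₜ[R] b := by
      clear h0
      induction hz using Submodule.span_induction with
      | mem t ht =>
        obtain ⟨y, hy, n, rfl⟩ := ht
        rcases List.mem_append.1 hy with hy | hy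
        · exact ⟨_, Submodule.subset_span ⟨y, hy, n, rfl⟩, 0, by simp⟩
        · rw [List.mem_singleton] at hy
          subst hy
          exact ⟨0, Submodule.zero_mem _, n, by simp⟩
      | zero => exact ⟨0, Submodule.zero_mem _, 0, by simp⟩
      | add a b _ _ iha ihb =>
        obtain ⟨z1, hz1, b1, rfl⟩ := iha
        obtain ⟨z2, hz2, b2, rfl⟩ := ihb
        exact ⟨z1 + z2, Submodule.add_mem _ hz1 hz2, b1 + b2, by
          rw [TensorProduct.tmul_add]; abel⟩
      | smul r a _ iha =>
        obtain ⟨z1, hz1, b1, rfl⟩ := iha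
        exact ⟨r • z1, Submodule.smul_mem _ _ hz1, r • b1, by
          rw [TensorProduct.tmul_smul, smul_add]⟩
    obtain ⟨z', hz', b, rfl⟩ := key
    have hl : ∀ z' ∈ Submodule.span R {t : I ⊗[R] N | ∃ y ∈ xs, ∃ n : N, t = y ⊗ₜ[R] n},
        TensorProduct.lift ((LinearMap.lsmul R N).comp I.subtype) z' ∈
          (Ideal.ofList (xs.map (fun i : I => (i : R))) • ⊤ : Submodule R N) := by
      intro z' hz'
      rw [← Submodule.mem_comap]
      revert z'
      refine Submodule.span_le.2 ?_
      rintro _ ⟨y, hy, n, rfl⟩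
      simp only [Submodule.comap_coe, Set.mem_preimage, TensorProduct.lift.tmul]
      exact Submodule.smul_mem_smul (Ideal.subset_span (List.mem_map.2 ⟨y, hy, rfl⟩)) trivial
    have hb : b ∈ (Ideal.ofList (xs.map (fun i : I => (i : R))) • ⊤ : Submodule R N) := by
      rw [← Submodule.Quotient.mk_eq_zero]
      apply h2
      simp only [smul_zero]
      rw [← Submodule.Quotient.mk_smul, Submodule.Quotient.mk_eq_zero]
      rw [map_add, TensorProduct.lift.tmul] at h0
      have : (x : R) • b = - TensorProduct.lift ((LinearMap.lsmul R N).comp I.subtype) z' :=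
        eq_neg_of_add_eq_zero_right h0
      rw [this]
      exact Submodule.neg_mem _ (hl _ hz')
    exact ih h1 _ (Submodule.add_mem _ hz' (tens_mem xs x b hb)) h0

lemma tens_inj {I : Ideal R} {N : Type*} [AddCommGroup N] [Module R N] (rs : List R)
    (hI : Ideal.ofList rs = I)
    (h : RingTheory.Sequence.IsWeaklyRegular N rs) :
    Function.Injective (I.subtype.rTensor N) := by
  have hrs : ∀ r ∈ rs, r ∈ I := fun r hr => hI ▸ Ideal.subset_span hr
  obtain ⟨xs, rfl⟩ : ∃ xs : List I, xs.map (fun i : I => (i : R)) = rs :=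
    ⟨rs.attach.map (fun r => ⟨r.1, hrs _ r.2⟩), by simp [List.map_map, Function.comp_def]⟩
  rw [injective_iff_map_eq_zero]
  intro z hz
  refine tens_inj_aux xs h z ?_ ?_
  · clear hz
    induction z using TensorProduct.induction_on with
    | zero => exact Submodule.zero_mem _
    | add a b ha hb => exact Submodule.add_mem _ ha hb
    | tmul i n =>
      have hi : i ∈ Submodule.span R {y : I | y ∈ xs} := by
        have hi : (i : R) ∈ (Submodule.span R {y : I | y ∈ xs}).map I.subtype := by
          rw [Submodule.map_span]
          have h1 : (i : R) ∈ Ideal.ofList (xs.map (fun i : I => (i : R))) := hI.symm ▸ i.2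
          refine Submodule.span_mono ?_ h1
          intro r hr
          obtain ⟨y, hy, rfl⟩ := List.mem_map.1 hr
          exact ⟨y, hy, rfl⟩
        obtain ⟨j, hj, hji⟩ := hi
        rwa [← Subtype.ext hji]
      induction hi using Submodule.span_induction with
      | mem y hy => exact Submodule.subset_span ⟨y, hy, n, rfl⟩
      | zero => simp
      | add a b _ _ ha hb => rw [TensorProduct.add_tmul]; exact Submodule.add_mem _ ha hb
      | smul r a _ ha =>
        rw [← TensorProduct.smul_tmul']; exact Submodule.smul_mem _ _ ha
  · have : TensorProduct.lift ((LinearMap.lsmul R N).comp I.subtype) =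
        (TensorProduct.lid R N).toLinearMap ∘ₗ I.subtype.rTensor N := by
      ext; simp
    rw [this]; simp [hz]

lemma step_inj {I : Ideal R} [I.IsMaximal] {N : Type*} [AddCommGroup N] [Module R N]
    (h : Function.Injective (I.subtype.rTensor N))
    {C : Type*} [AddCommGroup C] [Module R C] (A D : Submodule R C) (hAD : A ≤ D) (c : C)
    (hcA : c ∉ A) (hD : D = A ⊔ Submodule.span R {c}) (hIc : ∀ r ∈ I, r • c ∈ A) :
    Function.Injective ((Submodule.inclusion hAD).rTensor N) := by
  have hcD : c ∈ D := hD ▸ Submodule.mem_sup_right (Submodule.mem_span_singleton_self c)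
  let g : A × R →ₗ[R] D := (Submodule.inclusion hAD).coprod (LinearMap.toSpanSingleton R D ⟨c, hcD⟩)
  let k : I →ₗ[R] A :=
    LinearMap.codRestrict A ((LinearMap.toSpanSingleton R C c).comp I.subtype)
      (fun r => by simpa using hIc r r.2)
  let l : I →ₗ[R] A × R := (-k).prod I.subtype
  have hg : Function.Surjective g := by
    rintro ⟨d, hd⟩
    have hd' := hd
    rw [hD, Submodule.mem_sup] at hd'
    obtain ⟨a, ha, y, hy, rfl⟩ := hd'
    obtain ⟨r, rfl⟩ := Submodule.mem_span_singleton.1 hy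
    exact ⟨(⟨a, ha⟩, r), by ext; simp [g]⟩
  have hex : Function.Exact l g := by
    rintro ⟨a, r⟩
    constructor
    · intro h0
      have h1 : (a : C) + r • c = 0 := by simpa [g] using congrArg Subtype.val h0
      have hr : r ∈ I := by
        by_contra hr
        obtain ⟨s, i, hi, hs⟩ := Ideal.IsMaximal.exists_inv ‹_› hr
        apply hcA
        have : c = s • (r • c) + i • c := by rw [← mul_smul, ← add_smul, hs, one_smul]
        rw [this, eq_neg_of_add_eq_zero_right h1]
        exact A.add_mem (A.smul_mem _ (A.neg_mem a.2)) (hIc i hi)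
      refine ⟨⟨r, hr⟩, ?_⟩
      refine Prod.ext (Subtype.ext ?_) rfl
      simp [l, k, eq_neg_of_add_eq_zero_right h1]
    · rintro ⟨i, hi⟩
      rw [← hi]
      ext
      simp [l, g, k]
  have hT := rTensor_exact N hex hg
  rw [injective_iff_map_eq_zero]
  intro z hz
  have h1 : g.rTensor N ((LinearMap.inl R A R).rTensor N z) = 0 := by
    rw [← LinearMap.comp_apply, ← LinearMap.rTensor_comp]
    simpa [g] using hz
  obtain ⟨t, ht⟩ := (hT _).1 h1
  have h2 : I.subtype.rTensor N t = 0 := by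
    have : I.subtype = (LinearMap.snd R A R).comp l := by ext; simp [l]
    rw [this, LinearMap.rTensor_comp, LinearMap.comp_apply, ht, ← LinearMap.comp_apply,
      ← LinearMap.rTensor_comp]
    simp
  have h3 : t = 0 := h (by simpa using h2)
  have h4 : z = (LinearMap.fst R A R).rTensor N ((LinearMap.inl R A R).rTensor N z) := by
    rw [← LinearMap.comp_apply, ← LinearMap.rTensor_comp]
    simp
  rw [h4, ← ht, h3]
  simp

lemma sub_inj {I : Ideal R} [I.IsMaximal] {N : Type*} [AddCommGroup N] [Module R N]
    (h : Function.Injective (I.subtype.rTensor N))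
    {C : Type*} [AddCommGroup C] [Module R C] [IsNoetherian R C] (n : ℕ)
    (hn : ∀ r ∈ I ^ n, ∀ c : C, r • c = 0) (A : Submodule R C) :
    Function.Injective (A.subtype.rTensor N) := by
  induction A using WellFoundedGT.induction with
  | ind A ih =>
    by_cases hA : A = ⊤
    · subst hA
      exact (LinearEquiv.rTensor N (Submodule.topEquiv (R := R) (M := C))).injective
    · have : ∃ c, c ∉ A ∧ ∀ r ∈ I, r • c ∈ A := by
        by_contra! hcon
        obtain ⟨c, hc⟩ : ∃ c, c ∉ A := by
          by_contra! hh; exact hA (eq_top_iff.2 fun x _ => hh x)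
        have : ∀ j : ℕ, ∃ r ∈ I ^ j, r • c ∉ A := by
          intro j
          induction j with
          | zero => exact ⟨1, by simp, by simpa using hc⟩
          | succ j ihj =>
            obtain ⟨r, hr, hrc⟩ := ihj
            obtain ⟨s, hs, hsc⟩ := hcon _ hrc
            exact ⟨s * r, by rw [pow_succ']; exact Ideal.mul_mem_mul hs hr, by rwa [mul_smul]⟩
        obtain ⟨r, hr, hrc⟩ := this n
        exact hrc (by rw [hn r hr]; exact A.zero_mem)
      obtain ⟨c, hcA, hc⟩ := this
      have hle : A ≤ A ⊔ Submodule.span R {c} := le_sup_left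
      have hlt : A < A ⊔ Submodule.span R {c} := lt_of_le_of_ne hle (fun he => hcA (by
        rw [he]; exact Submodule.mem_sup_right (Submodule.mem_span_singleton_self c)))
      have h1 := ih _ hlt
      have h2 := step_inj h A _ hle c hcA rfl hc
      have : A.subtype = (A ⊔ Submodule.span R {c}).subtype.comp (Submodule.inclusion hle) := by
        ext; simp
      rw [this, LinearMap.rTensor_comp]
      exact h1.comp h2

lemma colon_mem [IsLocalRing R] [IsNoetherianRing R] {N : Type*} [AddCommGroup N] [Module R N]
    (h : Function.Injective ((maximalIdeal R).subtype.rTensor N))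
    (J : Ideal R) (u : R) (hu : u ∉ J) (y : N) (hy : u • y ∈ (J • ⊤ : Submodule R N)) :
    y ∈ (maximalIdeal R • ⊤ : Submodule R N) := by
  obtain ⟨n, hn⟩ : ∃ n, u ∉ J ⊔ maximalIdeal R ^ n := by
    by_contra! hcon
    apply hu
    have h0 := Ideal.iInf_pow_smul_eq_bot_of_isLocalRing (M := R ⧸ J) (maximalIdeal R)
      (Ideal.IsPrime.ne_top inferInstance)
    rw [← Ideal.Quotient.eq_zero_iff_mem, ← Submodule.mem_bot R, ← h0, Submodule.mem_iInf]
    intro n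
    obtain ⟨j, hj, i, hi, hji⟩ := Submodule.mem_sup.1 (hcon n)
    rw [← hji, map_add, Ideal.Quotient.eq_zero_iff_mem.2 hj, zero_add]
    have : (Ideal.Quotient.mk J i) = i • (1 : R ⧸ J) := by
      rw [Algebra.smul_def, mul_one]; rfl
    rw [this]
    exact Submodule.smul_mem_smul hi trivial
  set J' := J ⊔ maximalIdeal R ^ n with hJ'
  have hy' : u • y ∈ (J' • ⊤ : Submodule R N) := Submodule.smul_mono_left le_sup_left hy
  let A : Submodule R (R ⧸ J') := Submodule.span R {Ideal.Quotient.mk J' u}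
  have hA := sub_inj h (C := R ⧸ J') n (by
    intro r hr c
    obtain ⟨c, rfl⟩ := Ideal.Quotient.mk_surjective c
    rw [Algebra.smul_def]
    change Ideal.Quotient.mk J' r * _ = 0
    rw [Ideal.Quotient.eq_zero_iff_mem.2 (le_sup_right (a := J) hr), zero_mul]) A
  let a : A := ⟨Ideal.Quotient.mk J' u, Submodule.mem_span_singleton_self _⟩
  have h1 : (a ⊗ₜ[R] y : A ⊗[R] N) = 0 := by
    apply hA
    rw [map_zero, LinearMap.rTensor_tmul]
    apply (TensorProduct.quotTensorEquivQuotSMul N J').injective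
    rw [map_zero]
    change TensorProduct.quotTensorEquivQuotSMul N J' (Ideal.Quotient.mk J' u ⊗ₜ[R] y) = 0
    rw [TensorProduct.quotTensorEquivQuotSMul_mk_tmul]
    rwa [Submodule.Quotient.mk_eq_zero]
  let p : R →ₗ[R] A := LinearMap.toSpanSingleton R A a
  have hp : Function.Surjective p := by
    rintro ⟨b, hb⟩
    obtain ⟨r, rfl⟩ := Submodule.mem_span_singleton.1 hb
    exact ⟨r, by ext; simp [p, a]⟩
  have hker : LinearMap.ker p ≤ maximalIdeal R := by
    intro r hr
    by_contra hru
    have hunit : IsUnit r := by simpa using hru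
    obtain ⟨s, hs⟩ := hunit.exists_left_inv
    have h2 : r • Ideal.Quotient.mk J' u = 0 := by
      simpa [p, a] using congrArg Subtype.val (LinearMap.mem_ker.1 hr)
    apply hn
    rw [← Ideal.Quotient.eq_zero_iff_mem, ← one_smul R (Ideal.Quotient.mk J' u), ← hs, mul_smul,
      h2, smul_zero]
  let q : A →ₗ[R] R ⧸ maximalIdeal R :=
    ((LinearMap.ker p).liftQ (Submodule.mkQ (maximalIdeal R)) (by simpa using hker)).comp
      (p.quotKerEquivOfSurjective hp).symm.toLinearMap
  have hq : q a = 1 := by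
    have : (p.quotKerEquivOfSurjective hp).symm a = Submodule.Quotient.mk 1 := by
      rw [LinearEquiv.symm_apply_eq]
      exact (one_smul R a).symm
    simp only [q, LinearMap.comp_apply, LinearEquiv.coe_coe, this]
    rfl
  have h3 := congrArg (q.rTensor N) h1
  rw [map_zero, LinearMap.rTensor_tmul, hq] at h3
  have h4 := congrArg (TensorProduct.quotTensorEquivQuotSMul N (maximalIdeal R)) h3
  rw [TensorProduct.quotTensorEquivQuotSMul_mk_one_tmul, map_zero,
    Submodule.Quotient.mk_eq_zero] at h4
  exact h4

end core

section descend

lemma integral_dim {R S : Type*} [CommRing R] [CommRing S] [Algebra R S]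
    (hint : Algebra.IsIntegral R S) (hinj : Function.Injective (algebraMap R S)) :
    ringKrullDim S = ringKrullDim R := by
  apply le_antisymm
  · refine Order.krullDim_le_of_strictMono (PrimeSpectrum.comap (algebraMap R S)) ?_
    intro p q hpq
    exact Ideal.IsIntegral.comap_lt_comap (R := R) (I := p.asIdeal) (J := q.asIdeal) hpq
  · have : FaithfulSMul R S := (faithfulSMul_iff_algebraMap_injective R S).2 hinj
    refine iSup_le fun l => ?_
    obtain ⟨P, hP⟩ := (inferInstance : Nonempty (Ideal.primesOver (RelSeries.head l).asIdeal S))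
    have := hP.1
    have := hP.2
    obtain ⟨l', hl', -⟩ := Ideal.exists_ltSeries_of_hasGoingUp (S := S) l P
    rw [← hl']
    exact le_iSup (fun q : LTSeries (PrimeSpectrum S) => (q.length : WithBot ℕ∞)) l'

lemma bcm_descend {R S B : Type*} [CommRing R] [CommRing S] [CommRing B] [IsLocalRing R]
    [Algebra R S] [Algebra R B] [Algebra S B] [IsScalarTower R S B]
    (hloc : IsLocalRing S) (hint : Algebra.IsIntegral R S)
    (hinj : Function.Injective (algebraMap R S)) (hB : IsBigCohenMacaulay S hloc B)
    (s : Finset R) (hs : Ideal.span (s : Set R) = maximalIdeal R)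
    (hcard : (s.card : WithBot ℕ∞) = ringKrullDim R) :
    RingTheory.Sequence.IsWeaklyRegular B s.toList ∧
      (maximalIdeal R).map (algebraMap R B) ≠ ⊤ := by
  have : FaithfulSMul R S := (faithfulSMul_iff_algebraMap_injective R S).2 hinj
  have hcomap : (maximalIdeal S).comap (algebraMap R S) = maximalIdeal R :=
    IsLocalRing.maximalIdeal_comap (algebraMap R S)
  have hofl : Ideal.ofList s.toList = maximalIdeal R := by
    rw [← hs]
    exact congrArg Ideal.span (Set.ext fun x => by simp)
  have hmap : Ideal.ofList (s.toList.map (algebraMap R S)) =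
      (maximalIdeal R).map (algebraMap R S) := by
    rw [← Ideal.map_ofList, hofl]
  have hle : (maximalIdeal R).map (algebraMap R S) ≤ maximalIdeal S :=
    Ideal.map_le_iff_le_comap.2 hcomap.ge
  have hreg := hB (s.toList.map (algebraMap R S)) (by
    rw [integral_dim hint hinj, ← hcard]; simp) (by
    intro x hx
    apply hle
    rw [← hmap]
    exact Ideal.subset_span hx) (by
    change (Ideal.ofList _).radical = _
    rw [hmap]
    apply le_antisymm
    · exact (Ideal.IsPrime.radical_le_iff inferInstance).2 hle
    · rw [Ideal.radical_eq_sInf]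
      refine le_sInf ?_
      rintro P ⟨hP1, hP2⟩
      have := hP2
      have h1 : P.comap (algebraMap R S) = maximalIdeal R := by
        symm
        exact (IsLocalRing.maximalIdeal.isMaximal R).eq_of_le
          (Ideal.IsPrime.ne_top inferInstance) (Ideal.map_le_iff_le_comap.1 hP1)
      have h2 : P.IsMaximal := Ideal.isMaximal_of_isIntegral_of_isMaximal_comap (R := R) P
        (by rw [h1]; infer_instance)
      rw [IsLocalRing.eq_maximalIdeal h2])
  rw [List.map_map, ← RingHom.coe_comp, ← IsScalarTower.algebraMap_eq] at hreg
  refine ⟨(RingTheory.Sequence.isWeaklyRegular_map_algebraMap_iff B B s.toList).1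
    hreg.toIsWeaklyRegular, ?_⟩
  intro htop
  apply hreg.top_ne_smul
  rw [← Ideal.map_ofList, hofl, htop]
  simp

lemma final_step {R B : Type*} [CommRing R] [IsLocalRing R] [CommRing B] [Algebra R B]
    (hnoeth : IsNoetherianRing R) (u : R) (hu : u ∈ maximalIdeal R) (M : ℕ) (hM : 2 ≤ M)
    (w : B) (hw : w ^ M = algebraMap R B u)
    (hne : (maximalIdeal R).map (algebraMap R B) ≠ ⊤)
    (hcol : ∀ (J : Ideal R) (a : R), a ∉ J → ∀ y : B,
      algebraMap R B a * y ∈ J.map (algebraMap R B) →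
        y ∈ (maximalIdeal R).map (algebraMap R B))
    (K : Ideal R) (hmem : w ^ (M - 1) ∈ K.map (algebraMap R B)) :
    u ∈ maximalIdeal R * K := by
  have hww : w * w ^ (M - 1) = algebraMap R B u := by
    rw [← pow_succ', ← hw]; congr 1; omega
  by_contra hcon
  have huK : u ∈ K := by
    by_contra huK
    apply hne
    rw [Ideal.eq_top_iff_one]
    refine hcol K u huK 1 ?_
    rw [mul_one, ← hww]
    exact Ideal.mul_mem_left _ _ hmem
  obtain ⟨J, ⟨hJ1, hJ2, hJ3⟩, hJmax⟩ := set_has_maximal_iff_noetherian.2 hnoeth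
    {J : Ideal R | maximalIdeal R * K ≤ J ∧ J ≤ K ∧ u ∉ J}
    ⟨_, le_rfl, Ideal.mul_le_right, hcon⟩
  have hK : K ≤ J ⊔ Ideal.span {u} := by
    intro k hk
    by_cases hkJ : k ∈ J
    · exact Ideal.mem_sup_left hkJ
    have hlt : J < J ⊔ Ideal.span {k} := lt_of_le_of_ne le_sup_left (fun he => hkJ (by
      rw [he]; exact Ideal.mem_sup_right (Ideal.mem_span_singleton_self k)))
    have huk : u ∈ J ⊔ Ideal.span {k} := by
      by_contra huk
      exact hJmax _ ⟨hJ1.trans le_sup_left, sup_le hJ2 (by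
        rw [Ideal.span_singleton_le_iff_mem]; exact hk), huk⟩ hlt
    obtain ⟨j, hj, y, hy, hjy⟩ := Submodule.mem_sup.1 huk
    obtain ⟨r, rfl⟩ := Ideal.mem_span_singleton'.1 hy
    by_cases hr : r ∈ maximalIdeal R
    · exact absurd (hjy ▸ J.add_mem hj (hJ1 (Ideal.mul_mem_mul hr hk))) hJ3
    · have hunit : IsUnit r := by simpa using hr
      obtain ⟨t, ht⟩ := hunit.exists_left_inv
      have : k = -(t * j) + t * u := by
        rw [← hjy]; linear_combination (-k) * ht
      rw [this]
      exact Ideal.add_mem _ (Ideal.mem_sup_left (J.neg_mem (Ideal.mul_mem_left J _ hj)))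
        (Ideal.mem_sup_right (Ideal.mul_mem_left _ _ (Ideal.mem_span_singleton_self u)))
  have hmem2 := Ideal.map_mono (f := algebraMap R B) hK hmem
  rw [Ideal.map_sup, Ideal.map_span, Set.image_singleton] at hmem2
  obtain ⟨j, hj, y, hy, hjy⟩ := Submodule.mem_sup.1 hmem2
  obtain ⟨b, rfl⟩ := Ideal.mem_span_singleton'.1 hy
  have h1 : 1 - w * b ∈ (maximalIdeal R).map (algebraMap R B) := by
    refine hcol J u hJ3 _ ?_
    have : algebraMap R B u * (1 - w * b) = w * j := by
      linear_combination (-1) * hww - w * hjy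
    rw [this]
    exact Ideal.mul_mem_left _ _ hj
  apply hne
  rw [Ideal.eq_top_iff_one]
  have h2 : 1 - (w * b) ^ M ∈ (maximalIdeal R).map (algebraMap R B) := by
    have := sub_dvd_pow_sub_pow 1 (w * b) M
    rw [one_pow] at this
    exact Ideal.mem_of_dvd _ this h1
  have h3 : (w * b) ^ M ∈ (maximalIdeal R).map (algebraMap R B) := by
    rw [mul_pow, hw]
    exact Ideal.mul_mem_right _ _ (Ideal.mem_map_of_mem _ hu)
  simpa using Ideal.add_mem _ h2 h3

end descend

theorem stmt11 {R : Type*} [CommRing R] [IsDomain R] [IsLocalRing R]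
    (hreg : IsRegularLocal R) [IsAdicComplete (maximalIdeal R) R]
    (u : R) (hu : u ∈ maximalIdeal R) (M : ℕ) (hM : 2 ≤ M)
    (v : AlgebraicClosure (FractionRing R))
    (hv : v ^ M = algebraMap R (AlgebraicClosure (FractionRing R)) u)
    (L : IntermediateField (FractionRing R) (AlgebraicClosure (FractionRing R)))
    (hL : L = IntermediateField.adjoin (FractionRing R) {v})
    (v' : L) (hv' : (v' : AlgebraicClosure (FractionRing R)) = v)
    (R' : Subalgebra R L)
    (hR' : R' = (integralClosure (Algebra.adjoin R {v'}) L).restrictScalars R)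
    (w : R') (hw : (w : L) = v')
    (B : Type*) [CommRing B] [Algebra R' B] [Algebra R B] [IsScalarTower R R' B]
    (hloc : IsLocalRing R') (hB : IsBigCohenMacaulay R' hloc B)
    (K : Ideal R)
    (hmem : algebraMap R' B w ^ (M - 1) ∈ Ideal.map (algebraMap R B) K) :
    u ∈ maximalIdeal R * K := by
  classical
  obtain ⟨hnoeth, _, s, hs, hcard⟩ := hreg
  have hMpos : 0 < M := by omega
  have hv'M : v' ^ M = algebraMap R L u := by
    apply Subtype.ext
    simp only [SubmonoidClass.coe_pow, hv', hv]
    rfl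
  have hwM : w ^ M = algebraMap R R' u := by
    apply Subtype.ext
    rw [SubmonoidClass.coe_pow, hw, hv'M]
    rfl
  have hv'int : IsIntegral R v' := by
    refine IsIntegral.of_pow hMpos ?_
    rw [hv'M]
    exact isIntegral_algebraMap
  have hint : Algebra.IsIntegral R R' := by
    constructor
    intro x
    have hx : (x : L) ∈ (integralClosure (Algebra.adjoin R {v'}) L).restrictScalars R := hR' ▸ x.2
    have hx' : IsIntegral (Algebra.adjoin R {v'}) (x : L) := hx
    have : Algebra.IsIntegral R (Algebra.adjoin R {v'}) := by
      apply Algebra.IsIntegral.adjoin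
      intro y hy
      rw [Set.mem_singleton_iff] at hy
      rwa [hy]
    have hx2 : IsIntegral R (x : L) := isIntegral_trans _ hx'
    exact (isIntegral_algHom_iff R'.val Subtype.val_injective).1 hx2
  have hinjL : Function.Injective (algebraMap R L) := by
    rw [IsScalarTower.algebraMap_eq R (FractionRing R) L]
    exact (algebraMap (FractionRing R) L).injective.comp (IsFractionRing.injective R _)
  have hinj : Function.Injective (algebraMap R R') := by
    intro a b hab
    exact hinjL (congrArg Subtype.val hab)
  obtain ⟨hweak, hne⟩ := bcm_descend hloc hint hinj hB s hs hcard
  have hT := tens_inj (I := maximalIdeal R) s.toList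
    (hs ▸ congrArg Ideal.span (Set.ext fun x => by simp)) hweak
  have hcol : ∀ (J : Ideal R) (a : R), a ∉ J → ∀ y : B,
      algebraMap R B a * y ∈ J.map (algebraMap R B) →
        y ∈ (maximalIdeal R).map (algebraMap R B) := by
    intro J a ha y hy
    have := colon_mem hT J a ha y (by
      rw [Ideal.smul_top_eq_map, Submodule.restrictScalars_mem, Algebra.smul_def]; exact hy)
    rwa [Ideal.smul_top_eq_map, Submodule.restrictScalars_mem] at this
  have hwB : algebraMap R' B w ^ M = algebraMap R B u := by
    rw [← map_pow, hwM, ← IsScalarTower.algebraMap_apply]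
  exact final_step hnoeth u hu M hM (algebraMap R' B w) hwB hne hcol K hmem
end
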